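/- arXiv:2102.13219 — 2 statements merged into one kernel-verified Lean document; each statement's English description precedes it below -/
import Mathlib

section
/- Let G_d be a compact subgroup of O(d) with Haar probability measure π_d, let x ~ N(0, I_d), and define F_k(z) = ∫_{G_d} (⟨z, g·z⟩/d)^k π_d(dg). For any fixed integer k ≥ 1 there exists a constant C_k, depending only on k, such that: if k is odd, Var[F_k(x)] ≤ (C_k/d)·E[F_{k−1}(x)²]; if k is even, Var[F_k(x)] ≤ (C_k/d)·min( E[F_{k−2}(x)²], E[F_k(x)²]^{(2k−1)/(2k)} ). -/
/-!
Write `a_g(z) = ⟪z, g z⟫ / d`, so that `F_k(z)` is the average of `a_g(z) ^ k` over the group.  The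
Gaussian Poincaré inequality (`gaussian_poincare`, up to the value of the constant) reduces the
theorem to pointwise bounds on the gradient `(k / d) ∫ a_g ^ (k - 1) • (g z + g⁻¹ z)`.

* For odd `k`, the triangle inequality gives `‖∇F_k‖² ≤ (4 k² / d) (‖z‖² / d) F_{k-1}²`.
* For even `k`, the bound `|a_g| ≤ ‖z‖² / d` gives in the same way
  `‖∇F_k‖² ≤ (4 k² / d) (‖z‖² / d)³ F_{k-2}²`.
* For even `k`, symmetry under `g ↦ g⁻¹` turns the gradient into `(2 k / d) ∫ a_g ^ (k - 1) • g z`.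
  Its square is a double average of `a_g ^ (k - 1) a_h ^ (k - 1) ⟪g z, h z⟫`, where
  `⟪g z, h z⟫ = d a_{g⁻¹ h}(z)` is itself an overlap.  Young's inequality, invariance, and Jensen's
  inequality give `‖∇F_k‖² ≤ (8 k² / d) F_k ^ ((2 k - 1) / k)`; Jensen's inequality for the
  Gaussian measure then gives the power of `E[F_k²]`.

In the first two cases, the powers of `‖z‖² / d` are removed by homogeneity of `F_m²`: they are
dominated by `exp (‖z‖² / (4 d))`, and tilting the Gaussian by this weight amounts to a dilation
whose total effect is bounded independently of `d` (`lintegral_norm_pow_mul_le`).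

The group carries no topology, and only the quadratic overlaps are assumed measurable.  Left
invariance nevertheless makes every matrix coefficient a.e. measurable
(`InvariantAction.aemeasurable_inner`), and Fubini's theorem for functions of the matrix
coefficients then gives the invariance under inversion that is needed
(`InvariantAction.integral_overlap_symm`).
-/


open MeasureTheory ProbabilityTheory

/-- The standard Gaussian measure `N(0, I_d)` on `ℝ^d`. -/
noncomputable def stdGaussian (d : ℕ) : Measure (Fin d → ℝ) :=
  Measure.pi fun _ => gaussianReal 0 1

/-! ### A Poincaré inequality for the Gaussian measure -/

lemma integrable_one_add_norm_pow {H : Type*} [NormedAddCommGroup H] [NormedSpace ℝ H]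
    [CompleteSpace H] [SecondCountableTopology H] [MeasurableSpace H] [BorelSpace H]
    (ν : Measure H) [IsGaussian ν] (n : ℕ) : Integrable (fun x => (1 + ‖x‖) ^ n) ν := by
  rcases Nat.eq_zero_or_pos n with rfl | hn
  · simp
  have h : MemLp (fun x : H => 1 + ‖x‖) n ν :=
    (memLp_const (1 : ℝ)).add (IsGaussian.memLp_id ν n (ENNReal.natCast_ne_top n)).norm
  refine (h.integrable_norm_pow hn.ne').congr (ae_of_all _ fun x => ?_)
  have : 0 ≤ 1 + ‖x‖ := by positivity
  simp [abs_of_nonneg this]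

lemma integrable_of_growth {H : Type*} [NormedAddCommGroup H] [NormedSpace ℝ H]
    [CompleteSpace H] [SecondCountableTopology H] [MeasurableSpace H] [BorelSpace H]
    (ν : Measure H) [IsGaussian ν] {f : H → ℝ} (hf : Continuous f) {C : ℝ} {n : ℕ}
    (hb : ∀ x, |f x| ≤ C * (1 + ‖x‖) ^ n) : Integrable f ν :=
  ((integrable_one_add_norm_pow ν n).const_mul C).mono' hf.aestronglyMeasurable
    (ae_of_all _ hb)

lemma sq_intervalIntegral_le {a b : ℝ} (hab : a < b) {ψ : ℝ → ℝ} (hψ : Continuous ψ) :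
    (∫ t in a..b, ψ t) ^ 2 ≤ (b - a) * ∫ t in a..b, ψ t ^ 2 := by
  have hba : 0 < b - a := sub_pos.2 hab
  set I := ∫ t in a..b, ψ t with hI
  set c := I / (b - a) with hc
  have h0 : 0 ≤ ∫ t in a..b, (ψ t - c) ^ 2 :=
    intervalIntegral.integral_nonneg hab.le fun _ _ => sq_nonneg _
  have h1 : ∫ t in a..b, (ψ t - c) ^ 2
      = (∫ t in a..b, ψ t ^ 2) - 2 * c * I + c ^ 2 * (b - a) := by
    have : ∀ t, (ψ t - c) ^ 2 = ψ t ^ 2 - 2 * c * ψ t + c ^ 2 := fun t => by ring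
    simp_rw [this]
    rw [intervalIntegral.integral_add, intervalIntegral.integral_sub,
      intervalIntegral.integral_const_mul, intervalIntegral.integral_const]
    · simp [hI, mul_comm]
    all_goals exact Continuous.intervalIntegrable (by fun_prop) _ _
  have h2 : c * (b - a) = I := by rw [hc]; field_simp
  rw [h1] at h0
  have h3 : (b - a) * ((∫ t in a..b, ψ t ^ 2) - 2 * c * I + c ^ 2 * (b - a))
      = (b - a) * (∫ t in a..b, ψ t ^ 2) - I ^ 2 := by
    linear_combination (-2 * I + c * (b - a) + I) * h2
  have := mul_nonneg hba.le h0
  linarith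

lemma integral_inner_sq_stdGaussian {E : Type*} [NormedAddCommGroup E] [InnerProductSpace ℝ E]
    [FiniteDimensional ℝ E] [MeasurableSpace E] [BorelSpace E] (v : E) :
    ∫ y, inner ℝ v y ^ 2 ∂(ProbabilityTheory.stdGaussian E) = ‖v‖ ^ 2 := by
  have h := variance_dual_stdGaussian (innerSL ℝ v)
  rw [variance_of_integral_eq_zero (innerSL ℝ v).continuous.aemeasurable
    (integral_strongDual_stdGaussian _)] at h
  simpa using h

/-- **Gaussian Poincaré inequality** with a non-sharp constant.  The path
`cos θ • x + sin θ • y`, `0 ≤ θ ≤ π / 2`, joins two independent Gaussian vectors `x` and `y`;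
at each time, its position and its velocity are again independent standard Gaussian vectors. -/
lemma gaussian_poincare {E : Type*} [NormedAddCommGroup E] [InnerProductSpace ℝ E]
    [FiniteDimensional ℝ E] [MeasurableSpace E] [BorelSpace E] {f : E → ℝ} {u : E → E}
    (hf : ∀ x, HasGradientAt f (u x) x) (hu : Continuous u) {C : ℝ} {n : ℕ}
    (hfb : ∀ x, |f x| ≤ C * (1 + ‖x‖) ^ n) (hub : ∀ x, ‖u x‖ ≤ C * (1 + ‖x‖) ^ n) :
    variance f (ProbabilityTheory.stdGaussian E)
      ≤ 2 * ∫ x, ‖u x‖ ^ 2 ∂(ProbabilityTheory.stdGaussian E) := by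
  set μ := ProbabilityTheory.stdGaussian E with hμ
  have hfc : Continuous f :=
    continuous_iff_continuousAt.2 fun x => (hf x).hasFDerivAt.continuousAt
  have hC : 0 ≤ C := by simpa using (abs_nonneg _).trans (hfb 0)
  have hsq : ∀ x : E, C ^ 2 * (1 + ‖x‖) ^ (2 * n) = (C * (1 + ‖x‖) ^ n) ^ 2 := fun x => by ring
  have hf1 : Integrable f μ := integrable_of_growth μ hfc hfb
  have hf2 : Integrable (fun x => f x ^ 2) μ := by
    refine integrable_of_growth μ (by fun_prop) (C := C ^ 2) (n := 2 * n) fun x => ?_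
    rw [abs_pow, hsq]
    exact pow_le_pow_left₀ (abs_nonneg _) (hfb x) 2
  have hu2 : Integrable (fun x => ‖u x‖ ^ 2) μ := by
    refine integrable_of_growth μ (by fun_prop) (C := C ^ 2) (n := 2 * n) fun x => ?_
    rw [abs_pow, abs_norm, hsq]
    exact pow_le_pow_left₀ (norm_nonneg _) (hub x) 2
  have hvar : variance f μ = (∫ x, f x ^ 2 ∂μ) - (∫ x, f x ∂μ) ^ 2 :=
    variance_eq_sub ((memLp_two_iff_integrable_sq hfc.aestronglyMeasurable).2 hf2)
  -- twice the variance is the mean square increment between independent points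
  have hdouble : ∫ p : E × E, (f p.2 - f p.1) ^ 2 ∂(μ.prod μ) = 2 * variance f μ := by
    have e : ∀ p : E × E, (f p.2 - f p.1) ^ 2
        = f p.2 ^ 2 - 2 * (f p.1 * f p.2) + f p.1 ^ 2 := fun p => by ring
    simp_rw [e]
    have i1 : Integrable (fun p : E × E => f p.2 ^ 2) (μ.prod μ) := hf2.comp_snd μ
    have i2 : Integrable (fun p : E × E => f p.1 ^ 2) (μ.prod μ) := hf2.comp_fst μ
    have i3 : Integrable (fun p : E × E => 2 * (f p.1 * f p.2)) (μ.prod μ) :=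
      (hf1.mul_prod hf1).const_mul 2
    have i4 : Integrable (fun p : E × E => f p.2 ^ 2 - 2 * (f p.1 * f p.2)) (μ.prod μ) := i1.sub i3
    rw [integral_add i4 i2, integral_sub i1 i3, integral_const_mul, integral_prod_mul,
      integral_fun_snd (fun x => f x ^ 2), integral_fun_fst (fun x => f x ^ 2), hvar]
    simp
    ring
  obtain ⟨r, hr'⟩ : ∃ r : ℝ → E × E → E × E, ∀ θ p, r θ p = ContinuousLinearMap.rotation θ p :=
    ⟨_, fun _ _ => rfl⟩
  have hr : ∀ θ p, r θ p = (Real.cos θ • p.1 + Real.sin θ • p.2,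
      -Real.sin θ • p.1 + Real.cos θ • p.2) := fun θ p => by
    rw [hr', ContinuousLinearMap.rotation_apply]
  obtain ⟨ψ, hψ⟩ : ∃ ψ : E × E → ℝ → ℝ, ∀ p θ, ψ p θ = inner ℝ (u (r θ p).1) (r θ p).2 :=
    ⟨_, fun _ _ => rfl⟩
  have hψc : Continuous (fun q : ℝ × (E × E) => ψ q.2 q.1) := by
    simp only [hψ, hr]; fun_prop
  have hderiv : ∀ p θ, HasDerivAt (fun θ => f (r θ p).1) (ψ p θ) θ := by
    intro p θ
    have h1 : HasDerivAt (fun θ => (r θ p).1) (r θ p).2 θ := by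
      simp only [hr]
      exact ((Real.hasDerivAt_cos θ).smul_const _).add ((Real.hasDerivAt_sin θ).smul_const _)
    have := (hf (r θ p).1).hasFDerivAt.comp_hasDerivAt θ h1
    rw [hψ]
    simp only [InnerProductSpace.toDual_apply_apply] at this
    exact this
  have hpi : (0 : ℝ) < Real.pi / 2 := by positivity
  have hψcp : ∀ p, Continuous (ψ p) := fun p => hψc.comp (by fun_prop : Continuous fun θ => (θ, p))
  have hpath : ∀ p : E × E, (f p.2 - f p.1) ^ 2
      ≤ (Real.pi / 2) * ∫ θ in (0 : ℝ)..(Real.pi / 2), ψ p θ ^ 2 := by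
    intro p
    have h := intervalIntegral.integral_eq_sub_of_hasDerivAt (a := 0) (b := Real.pi / 2)
      (fun θ _ => hderiv p θ) ((hψcp p).intervalIntegrable _ _)
    have h' := sq_intervalIntegral_le hpi (hψcp p)
    rw [h] at h'
    simpa [hr] using h'
  -- the law of (position, velocity) does not depend on time
  have hψint : ∀ θ, ∫ p, ψ p θ ^ 2 ∂(μ.prod μ) = ∫ x, ‖u x‖ ^ 2 ∂μ := by
    intro θ
    have hrot : Measure.map (ContinuousLinearMap.rotation θ) (μ.prod μ) = μ.prod μ :=
      IsGaussian.map_rotation_eq_self (by simp [hμ]) θ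
    have hg : Continuous fun p : E × E => inner ℝ (u p.1) p.2 ^ 2 := by fun_prop
    have h1 : ∫ p, ψ p θ ^ 2 ∂(μ.prod μ) = ∫ p : E × E, inner ℝ (u p.1) p.2 ^ 2 ∂(μ.prod μ) := by
      conv_rhs => rw [← hrot]
      rw [integral_map (by fun_prop) hg.aestronglyMeasurable]
      simp_rw [hψ, hr']
    rw [h1, integral_prod]
    · simp_rw [hμ, integral_inner_sq_stdGaussian]
    · refine integrable_of_growth _ hg (C := C ^ 2) (n := 2 * n + 2) fun p => ?_
      rw [abs_pow]
      have h2 : |inner ℝ (u p.1) p.2| ≤ C * (1 + ‖p‖) ^ n * (1 + ‖p‖) := by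
        refine (abs_real_inner_le_norm _ _).trans (mul_le_mul ?_ ?_ (norm_nonneg _) (by positivity))
        · refine (hub p.1).trans ?_
          gcongr
          exact norm_fst_le p
        · have := norm_snd_le p
          linarith
      refine (pow_le_pow_left₀ (abs_nonneg _) h2 2).trans (le_of_eq (by ring))
  have hprodint : Integrable (fun q : (E × E) × ℝ => ψ q.1 q.2 ^ 2)
      ((μ.prod μ).prod (volume.restrict (Set.uIoc 0 (Real.pi / 2)))) := by
    have hb : Integrable (fun q : (E × E) × ℝ => C ^ 2 * 4 ^ (n + 1) * (1 + ‖q.1‖) ^ (2 * n + 2))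
        ((μ.prod μ).prod (volume.restrict (Set.uIoc 0 (Real.pi / 2)))) := by
      have : IsFiniteMeasure (volume.restrict (Set.uIoc (0 : ℝ) (Real.pi / 2))) := by
        rw [Set.uIoc_of_le hpi.le]; infer_instance
      exact ((integrable_one_add_norm_pow (μ.prod μ) (2 * n + 2)).const_mul _).comp_fst _
    refine hb.mono' ?_ (ae_of_all _ fun q => ?_)
    · exact ((hψc.comp continuous_swap).pow 2).aestronglyMeasurable
    · obtain ⟨p, θ⟩ := q
      have hn1 := norm_fst_le p
      have hn2 := norm_snd_le p
      have hc := Real.abs_cos_le_one θ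
      have hs := Real.abs_sin_le_one θ
      have hb1 : ‖(r θ p).1‖ ≤ 2 * ‖p‖ := by
        rw [hr]
        refine (norm_add_le _ _).trans ?_
        rw [norm_smul, norm_smul, Real.norm_eq_abs, Real.norm_eq_abs]
        nlinarith [norm_nonneg p.1, norm_nonneg p.2]
      have hb2 : ‖(r θ p).2‖ ≤ 2 * ‖p‖ := by
        rw [hr]
        refine (norm_add_le _ _).trans ?_
        rw [norm_smul, norm_smul, Real.norm_eq_abs, Real.norm_eq_abs, abs_neg]
        nlinarith [norm_nonneg p.1, norm_nonneg p.2]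
      have h2 : |ψ p θ| ≤ C * (2 * (1 + ‖p‖)) ^ n * (2 * (1 + ‖p‖)) := by
        rw [hψ]
        refine (abs_real_inner_le_norm _ _).trans (mul_le_mul ?_ ?_ (norm_nonneg _) (by positivity))
        · refine (hub _).trans ?_
          gcongr
          linarith [norm_nonneg p]
        · linarith
      rw [Real.norm_eq_abs, abs_pow]
      refine (pow_le_pow_left₀ (abs_nonneg _) h2 2).trans (le_of_eq ?_)
      have : (4 : ℝ) ^ (n + 1) = 2 ^ (2 * n + 2) := by
        rw [show 2 * n + 2 = 2 * (n + 1) by ring, pow_mul]; norm_num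
      simp only [this, mul_pow]
      ring
  have hswap : ∫ p, (∫ θ in (0 : ℝ)..(Real.pi / 2), ψ p θ ^ 2) ∂(μ.prod μ)
      = (Real.pi / 2) * ∫ x, ‖u x‖ ^ 2 ∂μ := by
    rw [Set.uIoc_of_le hpi.le] at hprodint
    simp_rw [intervalIntegral.integral_of_le hpi.le]
    rw [integral_integral_swap hprodint]
    simp_rw [hψint]
    simp [hpi.le]
  have hmain : 2 * variance f μ ≤ (Real.pi / 2) * ((Real.pi / 2) * ∫ x, ‖u x‖ ^ 2 ∂μ) := by
    rw [← hdouble, ← hswap, ← integral_const_mul]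
    refine integral_mono_of_nonneg (ae_of_all _ fun p => sq_nonneg _) ?_ (ae_of_all _ hpath)
    rw [Set.uIoc_of_le hpi.le] at hprodint
    simp_rw [intervalIntegral.integral_of_le hpi.le]
    exact hprodint.integral_prod_left.const_mul _
  have hJ : 0 ≤ ∫ x, ‖u x‖ ^ 2 ∂μ := integral_nonneg fun x => by positivity
  nlinarith [Real.pi_lt_four, Real.pi_pos, mul_nonneg (mul_nonneg (sub_nonneg.2 Real.pi_lt_four.le)
    (by linarith [Real.pi_pos] : 0 ≤ 4 + Real.pi)) hJ]

/-! ### Gaussian tilting and moments of homogeneous functions -/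

lemma withDensity_gaussianReal_tilt {l c : ℝ} (hc : 0 < c) (hlc : c ^ 2 * (1 - l) = 1) :
    (gaussianReal 0 1).withDensity (fun x => ENNReal.ofReal (Real.exp (l * x ^ 2 / 2)))
      = ENNReal.ofReal c • (gaussianReal 0 1).map (fun x => c * x) := by
  have hv : NNReal.mk (c ^ 2) (sq_nonneg c) * 1 ≠ 0 := by
    rw [mul_one]
    intro h
    have := congrArg NNReal.toReal h
    simp at this
    exact hc.ne' this
  rw [gaussianReal_map_const_mul, gaussianReal_of_var_ne_zero _ one_ne_zero,
    gaussianReal_of_var_ne_zero _ hv, ← withDensity_mul _ (measurable_gaussianPDF _ _) (by fun_prop),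
    ← withDensity_smul _ (measurable_gaussianPDF _ _)]
  congr 1
  ext1 x
  simp only [Pi.mul_apply, Pi.smul_apply, gaussianPDF, smul_eq_mul]
  rw [← ENNReal.ofReal_mul (gaussianPDFReal_nonneg _ _ _), ← ENNReal.ofReal_mul hc.le]
  congr 1
  simp only [gaussianPDFReal, NNReal.coe_one, mul_one, NNReal.coe_mk, mul_zero,
    sub_zero]
  rw [Real.sqrt_mul (by positivity) (c ^ 2), Real.sqrt_sq hc.le, mul_assoc, ← Real.exp_add]
  have h1 : l = 1 - 1 / c ^ 2 := by field_simp; linarith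
  have : -x ^ 2 / 2 + l * x ^ 2 / 2 = -x ^ 2 / (2 * c ^ 2) := by
    rw [h1]; field_simp; ring
  rw [this, mul_inv]
  field_simp

lemma withDensity_pi_gaussian_tilt {d : ℕ} {l c : ℝ} (hc : 0 < c) (hlc : c ^ 2 * (1 - l) = 1) :
    (Measure.pi fun _ : Fin d => gaussianReal 0 1).withDensity
        (fun x => ∏ i, ENNReal.ofReal (Real.exp (l * x i ^ 2 / 2)))
      = ENNReal.ofReal c ^ d •
        (Measure.pi fun _ : Fin d => gaussianReal 0 1).map (fun x i => c * x i) := by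
  have hm : Measurable fun x : ℝ => ENNReal.ofReal (Real.exp (l * x ^ 2 / 2)) := by fun_prop
  have hS : IsFiniteMeasure ((gaussianReal 0 1).withDensity
      (fun x => ENNReal.ofReal (Real.exp (l * x ^ 2 / 2)))) := by
    rw [withDensity_gaussianReal_tilt hc hlc]
    exact Measure.smul_finite _ ENNReal.ofReal_ne_top
  have hP : IsProbabilityMeasure ((gaussianReal 0 1).map (fun x : ℝ => c * x)) :=
    Measure.isProbabilityMeasure_map (by fun_prop)
  trans Measure.pi fun _ : Fin d => (gaussianReal 0 1).withDensity
      (fun x => ENNReal.ofReal (Real.exp (l * x ^ 2 / 2)))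
  · refine (Measure.pi_eq fun s hs => ?_).symm
    rw [withDensity_apply _ (MeasurableSet.univ_pi hs),
      ← lintegral_indicator (MeasurableSet.univ_pi hs)]
    have e : ∀ x : Fin d → ℝ, (Set.univ.pi s).indicator
        (fun x => ∏ i, ENNReal.ofReal (Real.exp (l * x i ^ 2 / 2))) x
        = ∏ i, (s i).indicator (fun y => ENNReal.ofReal (Real.exp (l * y ^ 2 / 2))) (x i) := by
      intro x
      by_cases hx : x ∈ Set.univ.pi s
      · rw [Set.indicator_of_mem hx]
        exact Finset.prod_congr rfl fun i _ => by rw [Set.indicator_of_mem (hx i trivial)]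
      · rw [Set.indicator_of_notMem hx]
        obtain ⟨i, hi⟩ : ∃ i, x i ∉ s i := by simpa using hx
        exact (Finset.prod_eq_zero (Finset.mem_univ i) (Set.indicator_of_notMem hi _)).symm
    have hmi : ∀ i, Measurable ((s i).indicator
        (fun y : ℝ => ENNReal.ofReal (Real.exp (l * y ^ 2 / 2)))) :=
      fun i => hm.indicator (hs i)
    simp_rw [e]
    rw [lintegral_prod_eq_prod_lintegral_of_indepFun Finset.univ
      (fun i (x : Fin d → ℝ) => (s i).indicator
        (fun y => ENNReal.ofReal (Real.exp (l * y ^ 2 / 2))) (x i))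
      (iIndepFun_pi fun i => (hmi i).aemeasurable)
      (fun i => (hmi i).comp (measurable_pi_apply i))]
    refine Finset.prod_congr rfl fun i _ => ?_
    rw [withDensity_apply _ (hs i), ← lintegral_indicator (hs i)]
    exact (measurePreserving_eval (fun _ : Fin d => gaussianReal 0 1) i).lintegral_comp (hmi i)
  · simp_rw [withDensity_gaussianReal_tilt hc hlc] at hS ⊢
    rw [Measure.pi_map_pi (fun i => by fun_prop)]
    refine Measure.pi_eq fun s hs => ?_
    simp [Finset.prod_mul_distrib]

/-- Multiplying by powers of `‖x‖² / d` changes the Gaussian integral of a nonnegative homogeneous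
function by at most a factor independent of the dimension.  The power is dominated by
`exp (‖x‖² / (4 d))`, and tilting by this exponential amounts to a dilation by
`c = (1 - 1 / (2 d)) ^ (-1 / 2)`, for which `c ^ d` is bounded. -/
lemma lintegral_norm_pow_mul_le {d : ℕ} (hd : 1 ≤ d) (j n : ℕ)
    {q : EuclideanSpace ℝ (Fin d) → ENNReal} (hq : Measurable q)
    (hom : ∀ (c : ℝ) x, 0 < c → q (c • x) = ENNReal.ofReal (c ^ n) * q x) :
    ∫⁻ x, ENNReal.ofReal ((‖x‖ ^ 2 / d) ^ j) * q x
        ∂(ProbabilityTheory.stdGaussian (EuclideanSpace ℝ (Fin d)))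
      ≤ ENNReal.ofReal (j.factorial * 4 ^ j * 2 ^ (n + 1)) *
        ∫⁻ x, q x ∂(ProbabilityTheory.stdGaussian (EuclideanSpace ℝ (Fin d))) := by
  have hd' : (1 : ℝ) ≤ d := by exact_mod_cast hd
  set l : ℝ := 1 / (2 * d) with hl
  have hl0 : 0 < l := by positivity
  have hl1 : l ≤ 1 / 2 := by
    rw [hl]; exact one_div_le_one_div_of_le (by norm_num) (by linarith)
  set c : ℝ := √(1 / (1 - l)) with hcdef
  have hpos : 0 < 1 - l := by linarith
  have hc : 0 < c := by positivity
  have hc2 : c ^ 2 = 1 / (1 - l) := Real.sq_sqrt (by positivity)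
  have hlc : c ^ 2 * (1 - l) = 1 := by rw [hc2]; field_simp
  have hc1 : 1 ≤ c := by
    by_contra! h
    nlinarith
  have hc2' : c ^ 2 ≤ 2 := by nlinarith
  have hcn : c ^ n ≤ 2 ^ n := by
    refine pow_le_pow_left₀ hc.le ?_ n
    nlinarith
  have hcd : c ^ d ≤ 2 := by
    have h1 : (1 : ℝ) / 2 ≤ (1 - l) ^ d := by
      have := one_add_mul_le_pow (a := -l) (by linarith) d
      have h2 : (d : ℝ) * -l = -(1 / 2) := by rw [hl]; field_simp
      rw [h2] at this
      calc (1 : ℝ) / 2 = 1 + -(1 / 2) := by norm_num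
        _ ≤ _ := this
        _ = _ := by ring
    have h3 : (c ^ d) ^ 2 * (1 - l) ^ d = 1 := by
      rw [← pow_mul, mul_comm d 2, pow_mul, ← mul_pow, hlc, one_pow]
    have h4 : 1 ≤ c ^ d := one_le_pow₀ hc1
    nlinarith [mul_le_mul_of_nonneg_left h1 (sq_nonneg (c ^ d))]
  rw [← map_pi_eq_stdGaussian]
  have hmT : Measurable (WithLp.toLp 2 : (Fin d → ℝ) → EuclideanSpace ℝ (Fin d)) := by fun_prop
  rw [lintegral_map (by fun_prop) hmT, lintegral_map hq hmT]
  set γ := Measure.pi fun _ : Fin d => gaussianReal 0 1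
  have hqT : Measurable fun x : Fin d → ℝ => q (WithLp.toLp 2 x) := hq.comp hmT
  have hprod : ∀ x : Fin d → ℝ, ∏ i, ENNReal.ofReal (Real.exp (l * x i ^ 2 / 2))
      = ENNReal.ofReal (Real.exp (‖(WithLp.toLp 2 x : EuclideanSpace ℝ (Fin d))‖ ^ 2 / (4 * d))) := by
    intro x
    rw [← ENNReal.ofReal_prod_of_nonneg (fun i _ => (Real.exp_pos _).le), ← Real.exp_sum,
      EuclideanSpace.real_norm_sq_eq, ← Finset.sum_div, ← Finset.mul_sum]
    congr 2
    simp only [hl]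
    field_simp
    ring
  calc ∫⁻ x, ENNReal.ofReal ((‖(WithLp.toLp 2 x : EuclideanSpace ℝ (Fin d))‖ ^ 2 / d) ^ j)
          * q (WithLp.toLp 2 x) ∂γ
      ≤ ∫⁻ x, ENNReal.ofReal (j.factorial * 4 ^ j) *
          ((∏ i, ENNReal.ofReal (Real.exp (l * x i ^ 2 / 2))) * q (WithLp.toLp 2 x)) ∂γ := by
        refine lintegral_mono fun x => ?_
        rw [← mul_assoc]
        refine mul_le_mul_left ?_ _
        rw [hprod, ← ENNReal.ofReal_mul (by positivity)]
        refine ENNReal.ofReal_le_ofReal ?_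
        set s := ‖(WithLp.toLp 2 x : EuclideanSpace ℝ (Fin d))‖ ^ 2
        have h := Real.pow_div_factorial_le_exp (s / (4 * d)) (by positivity) j
        rw [div_le_iff₀ (by positivity)] at h
        calc (s / d) ^ j = 4 ^ j * (s / (4 * d)) ^ j := by
              rw [← mul_pow]; congr 1; field_simp
          _ ≤ 4 ^ j * (Real.exp (s / (4 * d)) * j.factorial) := by gcongr
          _ = _ := by ring
    _ = ENNReal.ofReal (j.factorial * 4 ^ j) * ∫⁻ x, q (WithLp.toLp 2 x) ∂(γ.withDensity
          (fun x => ∏ i, ENNReal.ofReal (Real.exp (l * x i ^ 2 / 2)))) := by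
        rw [lintegral_const_mul _ (by fun_prop), lintegral_withDensity_eq_lintegral_mul _
          (by fun_prop) hqT]
        rfl
    _ = ENNReal.ofReal (j.factorial * 4 ^ j) * (ENNReal.ofReal c ^ d *
          (ENNReal.ofReal (c ^ n) * ∫⁻ x, q (WithLp.toLp 2 x) ∂γ)) := by
        rw [withDensity_pi_gaussian_tilt hc hlc, lintegral_smul_measure,
          lintegral_map hqT (by fun_prop), ← lintegral_const_mul _ hqT, smul_eq_mul]
        congr 2
        refine lintegral_congr fun x => ?_
        rw [← hom c _ hc]
        rfl
    _ ≤ _ := by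
        rw [← mul_assoc, ← mul_assoc, ← ENNReal.ofReal_pow hc.le,
          ← ENNReal.ofReal_mul (by positivity), ← ENNReal.ofReal_mul (by positivity)]
        refine mul_le_mul_left (ENNReal.ofReal_le_ofReal ?_) _
        rw [mul_assoc _ (c ^ d)]
        refine mul_le_mul_of_nonneg_left ?_ (by positivity)
        calc c ^ d * c ^ n ≤ 2 * 2 ^ n := by gcongr
          _ = _ := by ring

/-- Bochner-integral form of `lintegral_norm_pow_mul_le`. -/
lemma integral_norm_pow_mul_le {d : ℕ} (hd : 1 ≤ d) (j n : ℕ)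
    {q : EuclideanSpace ℝ (Fin d) → ℝ} (hq : Continuous q) (hq0 : ∀ x, 0 ≤ q x)
    (hqi : Integrable q (ProbabilityTheory.stdGaussian (EuclideanSpace ℝ (Fin d))))
    (hom : ∀ (c : ℝ) x, q (c • x) = c ^ n * q x) :
    ∫ x, (‖x‖ ^ 2 / d) ^ j * q x ∂(ProbabilityTheory.stdGaussian (EuclideanSpace ℝ (Fin d)))
      ≤ (j.factorial * 4 ^ j * 2 ^ (n + 1)) *
        ∫ x, q x ∂(ProbabilityTheory.stdGaussian (EuclideanSpace ℝ (Fin d))) := by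
  have h := lintegral_norm_pow_mul_le hd j n (q := fun x => ENNReal.ofReal (q x))
    (by fun_prop) (fun c x hc => by rw [hom, ENNReal.ofReal_mul (by positivity)])
  rw [← ofReal_integral_eq_lintegral_ofReal hqi (ae_of_all _ hq0),
    ← ENNReal.ofReal_mul (by positivity)] at h
  have hi : 0 ≤ ∫ x, q x ∂(ProbabilityTheory.stdGaussian (EuclideanSpace ℝ (Fin d))) :=
    integral_nonneg hq0
  rw [integral_eq_lintegral_of_nonneg_ae
    (ae_of_all _ fun x => mul_nonneg (by positivity) (hq0 x))
    (Continuous.aestronglyMeasurable (by fun_prop))]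
  refine ENNReal.toReal_le_of_le_ofReal (by positivity) (le_trans (le_of_eq ?_) h)
  exact lintegral_congr fun x => ENNReal.ofReal_mul (by positivity)

/-! ### Averages of overlaps over an invariant probability measure -/

/-- A group acting by linear isometries, with a left-invariant probability measure for which the
quadratic overlaps `⟪z, g z⟫` are measurable.  Neither a topology on `G` nor measurability of the
group operations is part of the data. -/
structure InvariantAction {E G : Type*} [NormedAddCommGroup E] [InnerProductSpace ℝ E] [Group G]
    [MeasurableSpace G] (π : Measure G) (R : G → E →ₗᵢ[ℝ] E) : Prop where
  prob : IsProbabilityMeasure π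
  map_mul : ∀ g h x, R (g * h) x = R g (R h x)
  invariant : ∀ g₀ : G, Measure.map (fun g => g₀ * g) π = π
  measurable_quad : ∀ z, Measurable fun g => inner ℝ z (R g z)

/-- The normalised overlap `⟪z, g z⟫ / D`. -/
noncomputable def overlap {E G : Type*} [NormedAddCommGroup E] [InnerProductSpace ℝ E]
    (R : G → E →ₗᵢ[ℝ] E) (D : ℝ) (z : E) (g : G) : ℝ := inner ℝ z (R g z) / D

/-- The average of the `m`-th power of the overlap over the group. -/
noncomputable def overlapAvg {E G : Type*} [NormedAddCommGroup E] [InnerProductSpace ℝ E]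
    [MeasurableSpace G] (π : Measure G) (R : G → E →ₗᵢ[ℝ] E) (D : ℝ) (m : ℕ) (z : E) : ℝ :=
  ∫ g, overlap R D z g ^ m ∂π

/-- The gradient of `overlapAvg`; since `R g` is orthogonal, its adjoint is `R g⁻¹`. -/
noncomputable def overlapGrad {E G : Type*} [NormedAddCommGroup E] [InnerProductSpace ℝ E] [Group G]
    [MeasurableSpace G] (π : Measure G) (R : G → E →ₗᵢ[ℝ] E) (D : ℝ) (m : ℕ) (z : E) : E :=
  ∫ g, (m / D * overlap R D z g ^ (m - 1)) • (R g z + R g⁻¹ z) ∂π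

lemma aestronglyMeasurable_of_inner {E G : Type*} [NormedAddCommGroup E] [InnerProductSpace ℝ E]
    [FiniteDimensional ℝ E] [MeasurableSpace G] {π : Measure G} {v : G → E}
    (h : ∀ w, AEMeasurable (fun g => inner ℝ w (v g)) π) : AEStronglyMeasurable v π := by
  have e : v = fun g => ∑ i, inner ℝ (stdOrthonormalBasis ℝ E i) (v g) •
      stdOrthonormalBasis ℝ E i := by
    ext1 g
    exact ((stdOrthonormalBasis ℝ E).sum_repr' (v g)).symm
  rw [e]
  exact Finset.aestronglyMeasurable_fun_sum _ fun i _ =>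
    (h _).aestronglyMeasurable.smul_const _

namespace InvariantAction

variable {E G : Type*} [NormedAddCommGroup E] [InnerProductSpace ℝ E] [FiniteDimensional ℝ E]
  [Group G] [MeasurableSpace G] {π : Measure G} {R : G → E →ₗᵢ[ℝ] E}

omit [FiniteDimensional ℝ E] in
lemma map_one (h : InvariantAction π R) (x : E) : R 1 x = x := by
  apply (R 1).injective
  rw [← h.map_mul, mul_one]

omit [FiniteDimensional ℝ E] in
lemma inner_left_inv (h : InvariantAction π R) (g : G) (x y : E) :
    inner ℝ (R g⁻¹ x) y = inner ℝ x (R g y) := by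
  rw [← (R g).inner_map_map (R g⁻¹ x) y, ← h.map_mul, mul_inv_cancel, h.map_one]

omit [FiniteDimensional ℝ E] in
lemma inner_map_eq (h : InvariantAction π R) (g k : G) (x y : E) :
    inner ℝ (R g x) (R k y) = inner ℝ x (R (g⁻¹ * k) y) := by
  rw [h.map_mul, ← h.inner_left_inv g⁻¹, inv_inv]

omit [FiniteDimensional ℝ E] in
lemma aemeasurable_mul_left (h : InvariantAction π R) (g₀ : G) :
    AEMeasurable (fun g => g₀ * g) π := by
  have := h.prob
  by_contra hn
  have h0 := h.invariant g₀
  rw [Measure.map_of_not_aemeasurable hn] at h0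
  exact IsProbabilityMeasure.ne_zero π h0.symm

omit [FiniteDimensional ℝ E] in
lemma integral_mul_left (h : InvariantAction π R) (g₀ : G) {φ : G → ℝ}
    (hφ : AEStronglyMeasurable φ π) : ∫ g, φ (g₀ * g) ∂π = ∫ g, φ g ∂π := by
  have hi := h.invariant g₀
  conv_rhs => rw [← hi]
  rw [integral_map (h.aemeasurable_mul_left g₀) (by rwa [hi])]

/-- All matrix coefficients are a.e. measurable.  The vectors `w` for which `⟪w, g z⟫` is
a.e. measurable form a subspace; it contains the orbit of `z` by left invariance, and everything
orthogonal to that orbit. -/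
lemma aemeasurable_inner (h : InvariantAction π R) (w z : E) :
    AEMeasurable (fun g => inner ℝ w (R g z)) π := by
  have horb : ∀ g₀, AEMeasurable (fun g => inner ℝ (R g₀ z) (R g z)) π := by
    intro g₀
    have h1 : AEMeasurable (fun g => inner ℝ z (R g z)) (Measure.map (fun g => g₀⁻¹ * g) π) :=
      (h.measurable_quad z).aemeasurable
    have h2 := h1.comp_aemeasurable (h.aemeasurable_mul_left g₀⁻¹)
    refine h2.congr (ae_of_all _ fun g => ?_)
    exact (h.inner_map_eq _ _ _ _).symm
  set V := Submodule.span ℝ (Set.range fun g => R g z)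
  have hV : ∀ v ∈ V, AEMeasurable (fun g => inner ℝ v (R g z)) π := by
    intro v hv
    induction hv using Submodule.span_induction with
    | mem x hx => obtain ⟨g₀, rfl⟩ := hx; exact horb g₀
    | zero => simp
    | add x y _ _ hx hy => simp only [inner_add_left]; exact hx.add hy
    | smul a x _ hx => simp only [inner_smul_left]; exact hx.const_mul _
  obtain ⟨v, hv, v', hv', rfl⟩ := V.exists_add_mem_mem_orthogonal w
  refine (hV v hv).congr (ae_of_all _ fun g => ?_)
  have : inner ℝ v' (R g z) = 0 :=
    Submodule.inner_left_of_mem_orthogonal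
      (Submodule.subset_span (Set.mem_range_self (f := fun g => R g z) g)) hv'
  simp only [inner_add_left, this, add_zero]

lemma aesm (h : InvariantAction π R) (z : E) : AEStronglyMeasurable (fun g => R g z) π :=
  aestronglyMeasurable_of_inner fun w => h.aemeasurable_inner w z

lemma aesm_inv (h : InvariantAction π R) (z : E) : AEStronglyMeasurable (fun g => R g⁻¹ z) π :=
  aestronglyMeasurable_of_inner fun w => by
    refine (h.aemeasurable_inner z w).congr (ae_of_all _ fun g => ?_)
    exact (h.inner_left_inv g z w).symm.trans (real_inner_comm _ _)

omit [FiniteDimensional ℝ E] in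
lemma aesm_overlap (h : InvariantAction π R) (D : ℝ) (z : E) :
    AEStronglyMeasurable (overlap R D z) π :=
  ((h.measurable_quad z).div_const D).aestronglyMeasurable

omit [FiniteDimensional ℝ E] [Group G] [MeasurableSpace G] in
lemma _root_.abs_overlap_le (R : G → E →ₗᵢ[ℝ] E) {D : ℝ} (hD : 0 < D) (z : E) (g : G) :
    |overlap R D z g| ≤ ‖z‖ ^ 2 / D := by
  rw [overlap, abs_div, abs_of_pos hD]
  gcongr
  refine (abs_real_inner_le_norm _ _).trans (le_of_eq ?_)
  rw [(R g).norm_map, sq]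

omit [FiniteDimensional ℝ E] in
lemma integrable_overlap_pow (h : InvariantAction π R) {D : ℝ} (hD : 0 < D) (m : ℕ) (z : E) :
    Integrable (fun g => overlap R D z g ^ m) π := by
  have := h.prob
  refine Integrable.of_bound ((h.aesm_overlap D z).pow m) ((‖z‖ ^ 2 / D) ^ m)
    (ae_of_all _ fun g => ?_)
  rw [norm_pow, Real.norm_eq_abs]
  exact pow_le_pow_left₀ (abs_nonneg _) (abs_overlap_le R hD z g) m

omit [FiniteDimensional ℝ E] in
lemma integrable_abs_overlap_pow (h : InvariantAction π R) {D : ℝ} (hD : 0 < D) (m : ℕ) (z : E) :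
    Integrable (fun g => |overlap R D z g| ^ m) π := by
  simpa only [Real.norm_eq_abs, abs_pow] using (h.integrable_overlap_pow hD m z).norm

lemma aesm_gradIntegrand (h : InvariantAction π R) (D : ℝ) (m : ℕ) (z : E) :
    AEStronglyMeasurable
      (fun g => (m / D * overlap R D z g ^ (m - 1)) • (R g z + R g⁻¹ z)) π :=
  (((h.aesm_overlap D z).pow (m - 1)).const_mul _).smul ((h.aesm z).add (h.aesm_inv z))

omit [FiniteDimensional ℝ E] [MeasurableSpace G] in
lemma _root_.norm_gradIntegrand_le (R : G → E →ₗᵢ[ℝ] E) {D : ℝ} (hD : 0 < D) (m : ℕ) (z : E)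
    (g : G) : ‖(m / D * overlap R D z g ^ (m - 1)) • (R g z + R g⁻¹ z)‖
      ≤ m / D * |overlap R D z g| ^ (m - 1) * (2 * ‖z‖) := by
  rw [norm_smul, norm_mul, norm_pow, Real.norm_eq_abs (overlap R D z g), Real.norm_of_nonneg
    (by positivity : 0 ≤ (m : ℝ) / D)]
  gcongr
  refine (norm_add_le _ _).trans (le_of_eq ?_)
  rw [(R g).norm_map, (R g⁻¹).norm_map, two_mul]

omit [FiniteDimensional ℝ E] [MeasurableSpace G] in
lemma _root_.norm_gradIntegrand_le' (R : G → E →ₗᵢ[ℝ] E) {D : ℝ} (hD : 0 < D) (m : ℕ) {z : E}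
    {r : ℝ} (hz : ‖z‖ ≤ r) (g : G) :
    ‖(m / D * overlap R D z g ^ (m - 1)) • (R g z + R g⁻¹ z)‖
      ≤ m / D * (r ^ 2 / D) ^ (m - 1) * (2 * r) := by
  refine (norm_gradIntegrand_le R hD m z g).trans ?_
  have h1 : |overlap R D z g| ≤ r ^ 2 / D := (abs_overlap_le R hD z g).trans (by gcongr)
  have hr : 0 ≤ r := (norm_nonneg z).trans hz
  gcongr

lemma integrable_gradIntegrand (h : InvariantAction π R) {D : ℝ} (hD : 0 < D) (m : ℕ) (z : E) :
    Integrable (fun g => (m / D * overlap R D z g ^ (m - 1)) • (R g z + R g⁻¹ z)) π :=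
  have := h.prob
  Integrable.of_bound (h.aesm_gradIntegrand D m z) _
    (ae_of_all _ fun g => norm_gradIntegrand_le' R hD m le_rfl g)

lemma hasGradientAt_overlapAvg (h : InvariantAction π R) {D : ℝ} (hD : 0 < D) (m : ℕ) (z : E) :
    HasGradientAt (overlapAvg π R D m) (overlapGrad π R D m z) z := by
  have := h.prob
  rw [hasGradientAt_iff_hasFDerivAt]
  have key := hasFDerivAt_integral_of_dominated_of_fderiv_le (𝕜 := ℝ) (μ := π) (x₀ := z)
    (F := fun z g => overlap R D z g ^ m)
    (F' := fun z g => innerSL ℝ ((m / D * overlap R D z g ^ (m - 1)) • (R g z + R g⁻¹ z)))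
    (s := Metric.ball z 1)
    (bound := fun _ => m / D * ((‖z‖ + 1) ^ 2 / D) ^ (m - 1) * (2 * (‖z‖ + 1)))
    (Metric.ball_mem_nhds z one_pos)
    (Filter.Eventually.of_forall fun x => (h.aesm_overlap D x).pow m)
    (h.integrable_overlap_pow hD m z)
    ((innerSL ℝ).continuous.comp_aestronglyMeasurable (h.aesm_gradIntegrand D m z))
    (ae_of_all _ fun g x hx => by
      rw [innerSL_apply_norm]
      refine norm_gradIntegrand_le' R hD m ?_ g
      have := norm_le_norm_add_norm_sub' x z
      rw [mem_ball_iff_norm] at hx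
      linarith)
    (integrable_const _)
    (ae_of_all _ fun g x _ => by
      have h1 := (hasFDerivAt_id (𝕜 := ℝ) x).inner ℝ (R g).toContinuousLinearMap.hasFDerivAt
      have h2 := (h1.mul_const D⁻¹).pow m
      refine h2.congr_fderiv ?_
      ext y
      have e := h.inner_left_inv g x y
      simp only [overlap, innerSL_apply_apply, inner_smul_left, inner_add_left, e]
      simp [real_inner_comm y]
      ring)
  rw [ContinuousLinearMap.integral_comp_comm _ (h.integrable_gradIntegrand hD m z)] at key
  exact key

lemma continuous_overlapAvg (h : InvariantAction π R) {D : ℝ} (hD : 0 < D) (m : ℕ) :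
    Continuous (overlapAvg π R D m) :=
  continuous_iff_continuousAt.2 fun z =>
    (h.hasGradientAt_overlapAvg hD m z).hasFDerivAt.continuousAt

lemma continuous_overlapGrad (h : InvariantAction π R) {D : ℝ} (hD : 0 < D) (m : ℕ) :
    Continuous (overlapGrad π R D m) := by
  have := h.prob
  refine continuous_iff_continuousAt.2 fun z => ?_
  refine continuousAt_of_dominated
    (bound := fun _ => m / D * ((‖z‖ + 1) ^ 2 / D) ^ (m - 1) * (2 * (‖z‖ + 1)))
    (Filter.Eventually.of_forall fun x => h.aesm_gradIntegrand D m x) ?_ (integrable_const _)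
    (ae_of_all _ fun g => ?_)
  · filter_upwards [Metric.ball_mem_nhds z one_pos] with x hx
    refine ae_of_all _ fun g => norm_gradIntegrand_le' R hD m ?_ g
    have := norm_le_norm_add_norm_sub' x z
    rw [mem_ball_iff_norm] at hx
    linarith
  · have c1 := (R g).continuous
    have c2 := (R g⁻¹).continuous
    unfold overlap
    fun_prop

omit [FiniteDimensional ℝ E] in
lemma abs_overlapAvg_le (h : InvariantAction π R) {D : ℝ} (hD : 0 < D) (m : ℕ) (z : E) :
    |overlapAvg π R D m z| ≤ (‖z‖ ^ 2 / D) ^ m := by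
  have := h.prob
  have := norm_integral_le_of_norm_le_const (μ := π) (f := fun g => overlap R D z g ^ m)
    (C := (‖z‖ ^ 2 / D) ^ m) (ae_of_all _ fun g => by
      rw [norm_pow, Real.norm_eq_abs]
      exact pow_le_pow_left₀ (abs_nonneg _) (abs_overlap_le R hD z g) m)
  simpa [overlapAvg] using this

omit [FiniteDimensional ℝ E] in
lemma norm_overlapGrad_le (h : InvariantAction π R) {D : ℝ} (hD : 0 < D) (m : ℕ) (z : E) :
    ‖overlapGrad π R D m z‖
      ≤ m / D * (2 * ‖z‖) * ∫ g, |overlap R D z g| ^ (m - 1) ∂π := by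
  rw [← integral_const_mul]
  refine norm_integral_le_of_norm_le ((h.integrable_abs_overlap_pow hD (m - 1) z).const_mul _)
    (ae_of_all _ fun g => (norm_gradIntegrand_le R hD m z g).trans (le_of_eq (by ring)))

omit [FiniteDimensional ℝ E] in
lemma integral_abs_overlap_pow_le (h : InvariantAction π R) {D : ℝ} (hD : 0 < D) (m : ℕ) (z : E) :
    ∫ g, |overlap R D z g| ^ m ∂π ≤ (‖z‖ ^ 2 / D) ^ m := by
  have := h.prob
  have h1 := integral_mono (h.integrable_abs_overlap_pow hD m z)
    (integrable_const ((‖z‖ ^ 2 / D) ^ m))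
    (fun g => pow_le_pow_left₀ (abs_nonneg _) (abs_overlap_le R hD z g) m)
  simpa using h1

/-- The invariant measure does not distinguish `g` from `g⁻¹` when integrating the gradient.
This is Fubini for `⟪g z, h z⟫ ^ n * ⟪g y, h z⟫`: left invariance in `h` (with `g` fixed) gives
one side, left invariance in `g` (with `h` fixed) the other. -/
lemma integral_overlap_symm (h : InvariantAction π R) (D : ℝ) (n : ℕ) (y z : E) :
    ∫ g, overlap R D z g ^ n * inner ℝ y (R g z) ∂π
      = ∫ g, overlap R D z g ^ n * inner ℝ y (R g⁻¹ z) ∂π := by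
  have := h.prob
  let f : G → G → ℝ := fun g k => (inner ℝ (R g z) (R k z) / D) ^ n * inner ℝ (R g y) (R k z)
  have hf : Integrable (Function.uncurry f) (π.prod π) := by
    refine Integrable.of_bound ?_ ((‖z‖ * ‖z‖ / |D|) ^ n * (‖y‖ * ‖z‖))
      (ae_of_all _ fun p => ?_)
    · have m1 : ∀ v, AEStronglyMeasurable
          (fun p : G × G => (inner ℝ (R p.1 v) (R p.2 z) : ℝ)) (π.prod π) :=
        fun v => (h.aesm v).comp_fst.inner (h.aesm z).comp_snd
      exact (((m1 z).mul_const D⁻¹).pow n).mul (m1 y)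
    · simp only [Function.uncurry, f, norm_mul, norm_pow, norm_div]
      have b : ∀ v w : E, ∀ g k : G, ‖inner ℝ (R g v) (R k w)‖ ≤ ‖v‖ * ‖w‖ := fun v w g k => by
        simpa using norm_inner_le_norm (𝕜 := ℝ) (R g v) (R k w)
      rw [Real.norm_eq_abs D]
      gcongr <;> exact b _ _ _ _
  have hφ : AEStronglyMeasurable (fun g => overlap R D z g ^ n * inner ℝ y (R g z)) π :=
    ((h.aesm_overlap D z).pow n).mul (h.aemeasurable_inner y z).aestronglyMeasurable
  have hφ' : AEStronglyMeasurable (fun g => overlap R D z g ^ n * inner ℝ z (R g y)) π :=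
    ((h.aesm_overlap D z).pow n).mul (h.aemeasurable_inner z y).aestronglyMeasurable
  have e1 : ∀ g, ∫ k, f g k ∂π = ∫ g, overlap R D z g ^ n * inner ℝ y (R g z) ∂π := fun g => by
    rw [← h.integral_mul_left g⁻¹ hφ]
    refine integral_congr_ae (ae_of_all _ fun k => ?_)
    have e : ∀ v : E, inner ℝ v (R (g⁻¹ * k) z) = inner ℝ (R g v) (R k z) :=
      fun v => (h.inner_map_eq _ _ _ _).symm
    simp only [f, overlap, e]
  have e2 : ∀ k, ∫ g, f g k ∂π = ∫ g, overlap R D z g ^ n * inner ℝ y (R g⁻¹ z) ∂π := fun k => by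
    have e3 : ∀ g, inner ℝ y (R g⁻¹ z) = inner ℝ z (R g y) := fun g => by
      rw [real_inner_comm, h.inner_left_inv]
    simp_rw [e3]
    rw [← h.integral_mul_left k⁻¹ hφ']
    refine integral_congr_ae (ae_of_all _ fun g => ?_)
    have e : ∀ v : E, inner ℝ z (R (k⁻¹ * g) v) = inner ℝ (R g v) (R k z) := fun v => by
      rw [← h.inner_map_eq, real_inner_comm]
    simp only [f, overlap, e]
  have hs := integral_integral_swap hf
  simp_rw [e1, e2] at hs
  simpa using hs

omit [FiniteDimensional ℝ E] in
lemma integrable_overlap_smul (h : InvariantAction π R) {D : ℝ} (hD : 0 < D) (n : ℕ) (z : E)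
    {v : G → E} (hv : AEStronglyMeasurable v π) {C : ℝ} (hC : ∀ g, ‖v g‖ ≤ C) :
    Integrable (fun g => overlap R D z g ^ n • v g) π := by
  have := h.prob
  refine Integrable.of_bound (((h.aesm_overlap D z).pow n).smul hv) ((‖z‖ ^ 2 / D) ^ n * C)
    (ae_of_all _ fun g => ?_)
  rw [norm_smul, norm_pow, Real.norm_eq_abs]
  have h1 := abs_overlap_le R hD z g
  have h2 := hC g
  gcongr

lemma overlapGrad_eq (h : InvariantAction π R) {D : ℝ} (hD : 0 < D) (m : ℕ) (z : E) :
    overlapGrad π R D m z = (2 * (m / D)) • ∫ g, overlap R D z g ^ (m - 1) • R g z ∂π := by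
  have i1 := h.integrable_overlap_smul hD (m - 1) z (h.aesm z) (fun g => ((R g).norm_map z).le)
  have i2 := h.integrable_overlap_smul hD (m - 1) z (h.aesm_inv z)
    (fun g => ((R g⁻¹).norm_map z).le)
  have e : ∫ g, overlap R D z g ^ (m - 1) • R g⁻¹ z ∂π
      = ∫ g, overlap R D z g ^ (m - 1) • R g z ∂π := by
    refine ext_inner_left ℝ fun y => ?_
    rw [← integral_inner i1, ← integral_inner i2]
    simp_rw [inner_smul_right]
    exact (h.integral_overlap_symm D (m - 1) y z).symm
  simp_rw [overlapGrad, mul_smul]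
  rw [integral_smul]
  simp_rw [smul_add]
  rw [integral_add i1 i2, e, ← two_smul ℝ, smul_comm]

omit [FiniteDimensional ℝ E] in
lemma integral_abs_pow_pred_le (h : InvariantAction π R) {D : ℝ} (hD : 0 < D) {k : ℕ}
    (hk : 1 ≤ k) (hke : Even k) (z : E) :
    ∫ g, |overlap R D z g| ^ (k - 1) ∂π
      ≤ overlapAvg π R D k z ^ (((k : ℝ) - 1) / k) := by
  have := h.prob
  have hk' : (1 : ℝ) ≤ k := by exact_mod_cast hk
  set p : ℝ := ((k : ℝ) - 1) / k with hp
  have hp0 : 0 ≤ p := div_nonneg (by linarith) (by linarith)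
  have hp1 : p ≤ 1 := by rw [hp, div_le_one (by linarith)]; linarith
  have e : ∀ g, (overlap R D z g ^ k) ^ p = |overlap R D z g| ^ (k - 1) := fun g => by
    rw [← hke.pow_abs, ← Real.rpow_natCast, ← Real.rpow_mul (abs_nonneg _), hp,
      mul_div_cancel₀ _ (by linarith), ← Nat.cast_pred hk, Real.rpow_natCast]
  have hj := ConcaveOn.le_map_integral (μ := π) (Real.concaveOn_rpow hp0 hp1)
    (Real.continuous_rpow_const hp0).continuousOn isClosed_Ici
    (ae_of_all _ fun g => hke.pow_nonneg (overlap R D z g))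
    (h.integrable_overlap_pow hD k z)
    ((h.integrable_abs_overlap_pow hD (k - 1) z).congr (ae_of_all _ fun g => (e g).symm))
  simp_rw [e] at hj
  exact hj

/-- The bound that uses the group structure: expanding the square of the gradient produces
`⟪g z, h z⟫`, which is the overlap of `g⁻¹ h` and is integrated by left invariance. -/
lemma norm_sq_integral_le (h : InvariantAction π R) {D : ℝ} (hD : 0 < D) {k : ℕ}
    (hk : 1 ≤ k) (hke : Even k) (z : E) :
    ‖∫ g, overlap R D z g ^ (k - 1) • R g z ∂π‖ ^ 2
      ≤ 2 * D * overlapAvg π R D k z * ∫ g, |overlap R D z g| ^ (k - 1) ∂π := by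
  have := h.prob
  have i1 := h.integrable_overlap_smul hD (k - 1) z (h.aesm z) (fun g => ((R g).norm_map z).le)
  set u := ∫ g, overlap R D z g ^ (k - 1) • R g z ∂π with hu
  have young : ∀ a b : ℝ, |a| ^ (k - 1) * |b| ≤ a ^ k + b ^ k := fun a b => by
    rw [← hke.pow_abs a, ← hke.pow_abs b]
    have ha := abs_nonneg a
    have hb := abs_nonneg b
    rcases le_total |a| |b| with hab | hab
    · calc |a| ^ (k - 1) * |b| ≤ |b| ^ (k - 1) * |b| := by gcongr
        _ = |b| ^ k := pow_sub_one_mul (by lia) _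
        _ ≤ _ := by linarith [pow_nonneg ha k]
    · calc |a| ^ (k - 1) * |b| ≤ |a| ^ (k - 1) * |a| := by gcongr
        _ = |a| ^ k := pow_sub_one_mul (by lia) _
        _ ≤ _ := by linarith [pow_nonneg hb k]
  have hw : ∀ g, |inner ℝ u (R g z)| ≤ 2 * D * overlapAvg π R D k z := by
    intro g
    have hsm := (h.integrable_overlap_pow hD k z).1
    have hshift : Integrable (fun x => overlap R D z (g⁻¹ * x) ^ k) π := by
      have hh := h.integrable_overlap_pow hD k z
      rw [← h.invariant g⁻¹] at hh
      exact hh.comp_aemeasurable (h.aemeasurable_mul_left g⁻¹)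
    have e : ∀ x, inner ℝ (R g z) (R x z) = D * overlap R D z (g⁻¹ * x) := fun x => by
      rw [overlap, h.inner_map_eq]
      field_simp
    rw [real_inner_comm, hu, ← integral_inner i1, ← Real.norm_eq_abs]
    have := norm_integral_le_of_norm_le (μ := π)
      (f := fun x => inner ℝ (R g z) (overlap R D z x ^ (k - 1) • R x z))
      (((h.integrable_overlap_pow hD k z).add hshift).const_mul D) (ae_of_all _ fun x => by
        rw [inner_smul_right, e, Real.norm_eq_abs, abs_mul, abs_mul, abs_of_pos hD, abs_pow]
        have := mul_le_mul_of_nonneg_left (young (overlap R D z x) (overlap R D z (g⁻¹ * x))) hD.le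
        simp only [Pi.add_apply]
        linarith)
    refine this.trans (le_of_eq ?_)
    simp only [Pi.add_apply]
    rw [integral_const_mul, integral_add (h.integrable_overlap_pow hD k z) hshift,
      h.integral_mul_left g⁻¹ hsm, overlapAvg]
    ring
  have hF : 0 ≤ overlapAvg π R D k z := integral_nonneg fun g => hke.pow_nonneg _
  have hsq : ‖u‖ ^ 2 = ∫ g, overlap R D z g ^ (k - 1) * inner ℝ u (R g z) ∂π := by
    rw [← real_inner_self_eq_norm_sq]
    conv_lhs => rw [hu, ← hu, ← integral_inner i1]
    simp_rw [inner_smul_right]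
  rw [hsq, ← integral_const_mul]
  refine (le_abs_self _).trans ?_
  rw [← Real.norm_eq_abs]
  refine norm_integral_le_of_norm_le ((h.integrable_abs_overlap_pow hD (k - 1) z).const_mul _)
    (ae_of_all _ fun g => ?_)
  rw [norm_mul, norm_pow, Real.norm_eq_abs, Real.norm_eq_abs, mul_comm]
  exact mul_le_mul_of_nonneg_right (hw g) (by positivity)

end InvariantAction

/-! ### Variance bounds -/

section Variance

variable {d : ℕ} {G : Type*} [Group G] [MeasurableSpace G] {π : Measure G}
  {R : G → EuclideanSpace ℝ (Fin d) →ₗᵢ[ℝ] EuclideanSpace ℝ (Fin d)}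

lemma norm_sq_div_le (hd : 1 ≤ d) (z : EuclideanSpace ℝ (Fin d)) :
    ‖z‖ ^ 2 / d ≤ (1 + ‖z‖) ^ 2 := by
  have hd' : (1 : ℝ) ≤ d := by exact_mod_cast hd
  refine (div_le_self (by positivity) hd').trans ?_
  gcongr
  linarith

lemma InvariantAction.abs_overlapAvg_growth (h : InvariantAction π R) (hd : 1 ≤ d) (m : ℕ)
    (z : EuclideanSpace ℝ (Fin d)) : |overlapAvg π R d m z| ≤ (1 + ‖z‖) ^ (2 * m) := by
  refine (h.abs_overlapAvg_le (by exact_mod_cast hd) m z).trans ?_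
  rw [pow_mul]
  exact pow_le_pow_left₀ (by positivity) (norm_sq_div_le hd z) m

lemma InvariantAction.integrable_norm_pow_mul (h : InvariantAction π R) (hd : 1 ≤ d) (j m : ℕ) :
    Integrable (fun z => (‖z‖ ^ 2 / d) ^ j * overlapAvg π R d m z ^ 2)
      (ProbabilityTheory.stdGaussian (EuclideanSpace ℝ (Fin d))) := by
  have hc := h.continuous_overlapAvg (D := d) (by exact_mod_cast hd) m
  refine integrable_of_growth _ (by fun_prop) (C := 1) (n := 2 * j + 4 * m) fun z => ?_
  rw [abs_mul, abs_pow, abs_pow, abs_of_nonneg (by positivity : 0 ≤ ‖z‖ ^ 2 / (d : ℝ)), one_mul,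
    pow_add]
  refine mul_le_mul ?_ ?_ (by positivity) (by positivity)
  · rw [pow_mul]
    exact pow_le_pow_left₀ (by positivity) (norm_sq_div_le hd z) j
  · rw [show 4 * m = 2 * m * 2 by ring, pow_mul _ (2 * m) 2]
    exact pow_le_pow_left₀ (abs_nonneg _) (h.abs_overlapAvg_growth hd m z) 2

omit [Group G] in
lemma overlapAvg_smul (D : ℝ) (m : ℕ) (c : ℝ) (z : EuclideanSpace ℝ (Fin d)) :
    overlapAvg π R D m (c • z) = c ^ (2 * m) * overlapAvg π R D m z := by
  rw [overlapAvg, overlapAvg, ← integral_const_mul]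
  refine integral_congr_ae (ae_of_all _ fun g => ?_)
  simp only [overlap, map_smul, inner_smul_left, inner_smul_right, pow_mul, ← mul_pow]
  congr 1
  simp
  ring

lemma InvariantAction.variance_le (h : InvariantAction π R) (hd : 1 ≤ d) {k : ℕ} (hk : 1 ≤ k) :
    variance (overlapAvg π R d k) (ProbabilityTheory.stdGaussian (EuclideanSpace ℝ (Fin d)))
      ≤ 2 * ∫ z, ‖overlapGrad π R d k z‖ ^ 2
        ∂(ProbabilityTheory.stdGaussian (EuclideanSpace ℝ (Fin d))) := by
  have hd' : (1 : ℝ) ≤ d := by exact_mod_cast hd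
  have hk' : (1 : ℝ) ≤ k := by exact_mod_cast hk
  have hD : (0 : ℝ) < d := by linarith
  refine gaussian_poincare (C := 2 * k) (n := 2 * k) (h.hasGradientAt_overlapAvg hD k)
    (h.continuous_overlapGrad hD k) (fun z => ?_) (fun z => ?_)
  · refine (h.abs_overlapAvg_growth hd k z).trans ?_
    exact le_mul_of_one_le_left (by positivity) (by linarith)
  · refine (h.norm_overlapGrad_le hD k z).trans ?_
    have h1 : ∫ g, |overlap R d z g| ^ (k - 1) ∂π ≤ (1 + ‖z‖) ^ (2 * (k - 1)) := by
      refine (h.integral_abs_overlap_pow_le hD (k - 1) z).trans ?_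
      rw [pow_mul]
      exact pow_le_pow_left₀ (by positivity) (norm_sq_div_le hd z) _
    have h2 : (k : ℝ) / d ≤ k := div_le_self (by linarith) hd'
    have h3 : ‖z‖ ≤ (1 + ‖z‖) ^ 2 := by nlinarith [norm_nonneg z]
    have h4 : (2 * k) = 2 * (k - 1) + 2 := by lia
    calc (k : ℝ) / d * (2 * ‖z‖) * ∫ g, |overlap R d z g| ^ (k - 1) ∂π
        ≤ k * (2 * (1 + ‖z‖) ^ 2) * (1 + ‖z‖) ^ (2 * (k - 1)) := by gcongr
      _ = 2 * k * (1 + ‖z‖) ^ (2 * k) := by rw [h4, pow_add]; ring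

lemma InvariantAction.variance_le_of_grad_le (h : InvariantAction π R) (hd : 1 ≤ d) {k : ℕ}
    (hk : 1 ≤ k) (j m : ℕ) {A : ℝ}
    (hA : ∀ z, ‖overlapGrad π R d k z‖ ^ 2
      ≤ A * ((‖z‖ ^ 2 / d) ^ j * overlapAvg π R d m z ^ 2)) (hA0 : 0 ≤ A) :
    variance (overlapAvg π R d k) (ProbabilityTheory.stdGaussian (EuclideanSpace ℝ (Fin d)))
      ≤ 2 * (A * ((j.factorial * 4 ^ j * 2 ^ (4 * m + 1)) * ∫ z, overlapAvg π R d m z ^ 2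
        ∂(ProbabilityTheory.stdGaussian (EuclideanSpace ℝ (Fin d))))) := by
  have hc := h.continuous_overlapAvg (D := d) (by exact_mod_cast hd) m
  refine (h.variance_le hd hk).trans ?_
  refine mul_le_mul_of_nonneg_left ?_ zero_le_two
  have hi := h.integrable_norm_pow_mul hd 0 m
  simp only [pow_zero, one_mul] at hi
  have h1 := integral_norm_pow_mul_le hd j (4 * m) (q := fun z => overlapAvg π R d m z ^ 2)
    (by fun_prop) (fun z => sq_nonneg _) hi
    (fun c z => by rw [overlapAvg_smul]; ring)
  refine le_trans ?_ (mul_le_mul_of_nonneg_left h1 hA0)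
  rw [← integral_const_mul]
  exact integral_mono_of_nonneg (ae_of_all _ fun z => by positivity)
    ((h.integrable_norm_pow_mul hd j m).const_mul A) (ae_of_all _ hA)

lemma InvariantAction.variance_odd_le (h : InvariantAction π R) (hd : 1 ≤ d) {k : ℕ}
    (hk : 1 ≤ k) (hko : Odd k) :
    variance (overlapAvg π R d k) (ProbabilityTheory.stdGaussian (EuclideanSpace ℝ (Fin d)))
      ≤ (8 * k ^ 2 * (4 * 2 ^ (4 * (k - 1) + 1))) / d * ∫ z, overlapAvg π R d (k - 1) z ^ 2
        ∂(ProbabilityTheory.stdGaussian (EuclideanSpace ℝ (Fin d))) := by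
  have hD : (0 : ℝ) < d := by exact_mod_cast hd
  have hev : Even (k - 1) := by grind
  refine (h.variance_le_of_grad_le hd hk 1 (k - 1) (A := 4 * k ^ 2 / d) (fun z => ?_)
    (by positivity)).trans (le_of_eq ?_)
  · have h1 := h.norm_overlapGrad_le hD k z
    simp_rw [hev.pow_abs] at h1
    refine (pow_le_pow_left₀ (norm_nonneg _) h1 2).trans (le_of_eq ?_)
    rw [← overlapAvg]
    field_simp
    ring
  · simp
    ring

lemma InvariantAction.variance_even_le (h : InvariantAction π R) (hd : 1 ≤ d) {k : ℕ}
    (hk : 1 ≤ k) (hke : Even k) :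
    variance (overlapAvg π R d k) (ProbabilityTheory.stdGaussian (EuclideanSpace ℝ (Fin d)))
      ≤ (8 * k ^ 2 * (384 * 2 ^ (4 * (k - 2) + 1))) / d * ∫ z, overlapAvg π R d (k - 2) z ^ 2
        ∂(ProbabilityTheory.stdGaussian (EuclideanSpace ℝ (Fin d))) := by
  have hD : (0 : ℝ) < d := by exact_mod_cast hd
  have hev : Even (k - 2) := by grind
  have hk2 : k - 1 = (k - 2) + 1 := by grind
  refine (h.variance_le_of_grad_le hd hk 3 (k - 2) (A := 4 * k ^ 2 / d) (fun z => ?_)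
    (by positivity)).trans (le_of_eq ?_)
  · have h2 : ∫ g, |overlap R d z g| ^ (k - 1) ∂π ≤ ‖z‖ ^ 2 / d * overlapAvg π R d (k - 2) z := by
      rw [overlapAvg, ← integral_const_mul]
      refine integral_mono (h.integrable_abs_overlap_pow hD _ z)
        ((h.integrable_overlap_pow hD _ z).const_mul _) fun g => ?_
      simp only [hk2, pow_succ, hev.pow_abs]
      rw [mul_comm]
      exact mul_le_mul_of_nonneg_right (abs_overlap_le R hD z g) (hev.pow_nonneg _)
    have h1 := (h.norm_overlapGrad_le hD k z).trans
      (mul_le_mul_of_nonneg_left h2 (by positivity))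
    refine (pow_le_pow_left₀ (norm_nonneg _) h1 2).trans (le_of_eq ?_)
    field_simp
    ring
  · norm_num [Nat.factorial]
    ring

lemma InvariantAction.variance_even_le' (h : InvariantAction π R) (hd : 1 ≤ d) {k : ℕ}
    (hk : 1 ≤ k) (hke : Even k) :
    variance (overlapAvg π R d k) (ProbabilityTheory.stdGaussian (EuclideanSpace ℝ (Fin d)))
      ≤ (16 * k ^ 2) / d * (∫ z, overlapAvg π R d k z ^ 2
        ∂(ProbabilityTheory.stdGaussian (EuclideanSpace ℝ (Fin d)))) ^
          ((2 * k - 1 : ℝ) / (2 * k)) := by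
  have hD : (0 : ℝ) < d := by exact_mod_cast hd
  have hk' : (1 : ℝ) ≤ k := by exact_mod_cast hk
  set μ := ProbabilityTheory.stdGaussian (EuclideanSpace ℝ (Fin d)) with hμ
  set p : ℝ := (2 * k - 1 : ℝ) / (2 * k) with hp
  have hp0 : 0 ≤ p := div_nonneg (by linarith) (by linarith)
  have hp1 : p ≤ 1 := by rw [hp, div_le_one (by linarith)]; linarith
  have hF0 : ∀ z, 0 ≤ overlapAvg π R d k z := fun z => integral_nonneg fun g => hke.pow_nonneg _
  have hi : Integrable (fun z => overlapAvg π R d k z ^ 2) μ := by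
    simpa using h.integrable_norm_pow_mul hd 0 k
  have hcont := h.continuous_overlapAvg hD k
  have hip : Integrable (fun z => (overlapAvg π R d k z ^ 2) ^ p) μ := by
    refine (hi.add (integrable_const (1 : ℝ))).mono' ?_ (ae_of_all _ fun z => ?_)
    · exact ((hcont.pow 2).rpow_const fun _ => Or.inr hp0).aestronglyMeasurable
    · have h0 : 0 ≤ overlapAvg π R d k z ^ 2 := sq_nonneg _
      rw [Real.norm_of_nonneg (Real.rpow_nonneg h0 p)]
      simp only [Pi.add_apply]
      rcases le_total (overlapAvg π R d k z ^ 2) 1 with h1 | h1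
      · linarith [Real.rpow_le_one h0 h1 hp0]
      · have := Real.rpow_le_rpow_of_exponent_le h1 hp1
        rw [Real.rpow_one] at this
        linarith
  have hgrad : ∀ z, ‖overlapGrad π R d k z‖ ^ 2
      ≤ 8 * k ^ 2 / d * (overlapAvg π R d k z ^ 2) ^ p := by
    intro z
    have h1 := (h.norm_sq_integral_le hD hk hke z).trans (mul_le_mul_of_nonneg_left
      (h.integral_abs_pow_pred_le hD hk hke z) (mul_nonneg (by positivity) (hF0 z)))
    have h2 : (overlapAvg π R d k z ^ 2) ^ p
        = overlapAvg π R d k z * overlapAvg π R d k z ^ (((k : ℝ) - 1) / k) := by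
      have e : ∀ x : ℝ, 0 ≤ x → x * x ^ (((k : ℝ) - 1) / k) = x ^ (1 + ((k : ℝ) - 1) / k) :=
        fun x hx => by
          have : 0 ≤ ((k : ℝ) - 1) / k := div_nonneg (by linarith) (by linarith)
          rw [Real.rpow_add_of_nonneg hx zero_le_one this, Real.rpow_one]
      rw [e _ (hF0 z), ← Real.rpow_natCast, ← Real.rpow_mul (hF0 z)]
      congr 1
      rw [hp]
      push_cast
      field_simp
      ring
    rw [h.overlapGrad_eq hD, norm_smul, mul_pow, Real.norm_eq_abs, sq_abs, h2]
    refine (mul_le_mul_of_nonneg_left h1 (by positivity)).trans (le_of_eq ?_)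
    field_simp
    ring
  refine (h.variance_le hd hk).trans ?_
  have h3 : ∫ z, ‖overlapGrad π R d k z‖ ^ 2 ∂μ
      ≤ 8 * k ^ 2 / d * ∫ z, (overlapAvg π R d k z ^ 2) ^ p ∂μ := by
    rw [← integral_const_mul]
    exact integral_mono_of_nonneg (ae_of_all _ fun z => by positivity) (hip.const_mul _)
      (ae_of_all _ hgrad)
  have h4 : ∫ z, (overlapAvg π R d k z ^ 2) ^ p ∂μ ≤ (∫ z, overlapAvg π R d k z ^ 2 ∂μ) ^ p :=
    ConcaveOn.le_map_integral (Real.concaveOn_rpow hp0 hp1)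
      (Real.continuous_rpow_const hp0).continuousOn isClosed_Ici
      (ae_of_all _ fun z => Set.mem_Ici.2 (sq_nonneg _)) hi hip
  calc 2 * ∫ z, ‖overlapGrad π R d k z‖ ^ 2 ∂μ
      ≤ 2 * (8 * k ^ 2 / d * (∫ z, overlapAvg π R d k z ^ 2 ∂μ) ^ p) := by
        refine mul_le_mul_of_nonneg_left (h3.trans ?_) zero_le_two
        exact mul_le_mul_of_nonneg_left h4 (by positivity)
    _ = _ := by ring

end Variance

/-- An inner-product-preserving linear map on coordinate vectors, as a linear isometry of
Euclidean space. -/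
noncomputable def isometryOfPreserving {d : ℕ} (f : (Fin d → ℝ) → (Fin d → ℝ))
    (hl : IsLinearMap ℝ f) (hf : ∀ x y, ∑ i, f x i * f y i = ∑ i, x i * y i) :
    EuclideanSpace ℝ (Fin d) →ₗᵢ[ℝ] EuclideanSpace ℝ (Fin d) :=
  LinearMap.isometryOfInner
    { toFun := fun x => WithLp.toLp 2 (f x.ofLp)
      map_add' := fun x y => by simp [hl.map_add]
      map_smul' := fun c x => by simp [hl.map_smul] }
    (fun x y => by
      simpa [PiLp.inner_apply] using hf y.ofLp x.ofLp)


/-- **Variance bound for group-averaged overlap powers, Gaussian case.**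
Let `G` be a compact subgroup of `O(d)` (abstractly: a group acting on `ℝ^d` by linear,
inner-product-preserving maps) with Haar probability measure `π`, and
`F_k(z) = ∫_G (⟨z, g·z⟩/d)^k dπ(g)`.  For each fixed `k ≥ 1` there is a constant `C_k`
(depending only on `k`) such that, for `x ~ N(0, I_d)`:
if `k` is odd, `Var[F_k(x)] ≤ (C_k/d)·E[F_{k-1}(x)²]`; if `k` is even,
`Var[F_k(x)] ≤ (C_k/d)·min(E[F_{k-2}(x)²], E[F_k(x)²]^{(2k-1)/(2k)})`. -/
theorem variance_Fk_gaussian (k : ℕ) (hk : 1 ≤ k) :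
    ∃ Ck : ℝ, 0 < Ck ∧
      ∀ (d : ℕ), 1 ≤ d →
      ∀ (G : Type) [Group G] [MeasurableSpace G] (π : Measure G),
        IsProbabilityMeasure π →
        ∀ ρ : G → (Fin d → ℝ) → (Fin d → ℝ),
          (∀ g, IsLinearMap ℝ (ρ g)) →
          (∀ g x y, ∑ i, ρ g x i * ρ g y i = ∑ i, x i * y i) →
          (∀ g h x, ρ (g * h) x = ρ g (ρ h x)) →
          (∀ g₀ : G, Measure.map (fun g => g₀ * g) π = π) →
          (∀ z : Fin d → ℝ, Measurable fun g => ∑ i, z i * ρ g z i) →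
          let F : ℕ → (Fin d → ℝ) → ℝ :=
            fun m z => ∫ g, ((∑ i, z i * ρ g z i) / d) ^ m ∂π
          (Odd k →
            variance (F k) (stdGaussian d)
              ≤ Ck / d * ∫ x, F (k - 1) x ^ 2 ∂(stdGaussian d)) ∧
          (Even k →
            variance (F k) (stdGaussian d)
              ≤ Ck / d * min (∫ x, F (k - 2) x ^ 2 ∂(stdGaussian d))
                  ((∫ x, F k x ^ 2 ∂(stdGaussian d)) ^ ((2 * k - 1 : ℝ) / (2 * k)))) := by
  refine ⟨8 * k ^ 2 * (4 * 2 ^ (4 * (k - 1) + 1)) + 8 * k ^ 2 * (384 * 2 ^ (4 * (k - 2) + 1))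
    + 16 * k ^ 2, by positivity, ?_⟩
  intro d hd G _ _ π hπ ρ hlin hinner hmul hinv hmeas F
  set Ck : ℝ := 8 * k ^ 2 * (4 * 2 ^ (4 * (k - 1) + 1))
    + 8 * k ^ 2 * (384 * 2 ^ (4 * (k - 2) + 1)) + 16 * k ^ 2 with hCk
  let R : G → EuclideanSpace ℝ (Fin d) →ₗᵢ[ℝ] EuclideanSpace ℝ (Fin d) :=
    fun g => isometryOfPreserving (ρ g) (hlin g) (hinner g)
  have hR : ∀ g x, R g x = WithLp.toLp 2 (ρ g x.ofLp) := fun g x => rfl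
  have hin : ∀ g (x : EuclideanSpace ℝ (Fin d)),
      inner ℝ x (R g x) = ∑ i, x.ofLp i * ρ g x.ofLp i := fun g x => by
    simp [hR, PiLp.inner_apply, mul_comm]
  have h : InvariantAction π R :=
    { prob := hπ
      map_mul := fun g k x => by simp [hR, hmul]
      invariant := hinv
      measurable_quad := fun z => by simpa only [hin] using hmeas z.ofLp }
  have hF : ∀ m, F m = overlapAvg π R d m ∘ WithLp.toLp 2 := fun m => by
    ext1 z
    simp only [F, Function.comp, overlapAvg, overlap, hin]
  have hD : (0 : ℝ) < d := by exact_mod_cast hd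
  have hT : Measurable (WithLp.toLp 2 : (Fin d → ℝ) → EuclideanSpace ℝ (Fin d)) := by fun_prop
  have hvar : variance (F k) (_root_.stdGaussian d)
      = variance (overlapAvg π R d k)
        (ProbabilityTheory.stdGaussian (EuclideanSpace ℝ (Fin d))) := by
    rw [hF, ← map_pi_eq_stdGaussian,
      variance_map (h.continuous_overlapAvg hD k).aemeasurable hT.aemeasurable]
    rfl
  have hint : ∀ m, ∫ x, F m x ^ 2 ∂(_root_.stdGaussian d)
      = ∫ z, overlapAvg π R d m z ^ 2
        ∂(ProbabilityTheory.stdGaussian (EuclideanSpace ℝ (Fin d))) := fun m => by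
    have hc : Continuous fun z => overlapAvg π R d m z ^ 2 := (h.continuous_overlapAvg hD m).pow 2
    rw [← map_pi_eq_stdGaussian, integral_map hT.aemeasurable hc.aestronglyMeasurable, hF]
    rfl
  have hX : ∀ m, 0 ≤ ∫ z, overlapAvg π R d m z ^ 2
        ∂(ProbabilityTheory.stdGaussian (EuclideanSpace ℝ (Fin d))) :=
    fun m => integral_nonneg fun z => sq_nonneg _
  have p1 : (0 : ℝ) ≤ 8 * k ^ 2 * (4 * 2 ^ (4 * (k - 1) + 1)) := by positivity
  have p2 : (0 : ℝ) ≤ 8 * k ^ 2 * (384 * 2 ^ (4 * (k - 2) + 1)) := by positivity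
  have p3 : (0 : ℝ) ≤ 16 * k ^ 2 := by positivity
  rw [hvar]
  simp_rw [hint]
  refine ⟨fun hko => ?_, fun hke => ?_⟩
  · refine (h.variance_odd_le hd hk hko).trans (mul_le_mul_of_nonneg_right ?_ (hX _))
    exact div_le_div_of_nonneg_right (by linarith) hD.le
  · rw [mul_min_of_nonneg _ _ (by positivity)]
    refine le_min ?_ ?_
    · refine (h.variance_even_le hd hk hke).trans (mul_le_mul_of_nonneg_right ?_ (hX _))
      exact div_le_div_of_nonneg_right (by linarith) hD.le
    · refine (h.variance_even_le' hd hk hke).trans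
        (mul_le_mul_of_nonneg_right ?_ (Real.rpow_nonneg (hX _) _))
      exact div_le_div_of_nonneg_right (by linarith) hD.le
end

section
/- Let ψ, φ ∈ C(ℝ) with ψ(u)², φ(u)² ≤ c₀·exp(c₁u²/2) for some constants c₀ > 0 and c₁ < 1. For γ ∈ [−1,1] define E_d[ψ,φ](γ) = E_{w~Unif(S^{d−1}(1))}[ψ(⟨x,w⟩)φ(⟨x′,w⟩)] and E[ψ,φ](γ) = E_{g~N(0,I_d/d)}[ψ(⟨x,g⟩)φ(⟨x′,g⟩)], where x, x′ ∈ ℝ^d are any vectors with ‖x‖₂ = ‖x′‖₂ = √d and ⟨x,x′⟩/d = γ (by rotational invariance E_d and E do not depend on the choice of x, x′, and E does not depend on d). Then lim_{d→∞} sup_{γ∈[−1,1]} |E_d[ψ,φ](γ) − E[ψ,φ](γ)| = 0, and sup_{γ∈[−1,1]} |E[ψ,φ](γ)| < ∞. -/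
/-!
The two averages are compared by a coupling. Let `w` be uniform on the unit sphere and `g` an
independent standard Gaussian vector in `ℝ^d`, and put `ρ = |g| / √d`. Then `√d w` has the spherical
law, and its dilate `ρ √d w = |g| w` is a standard Gaussian vector (`map_norm_mul_dot`,
`map_norm_mul_pair`). Only rotation invariance of the law of `w` is used: for each fixed `g`, the law
of `⟨|g| v, w⟩` equals that of `⟨|v| g, w⟩`, since a Householder reflection maps one test vector to
the other, and `⟨g, w⟩` is standard Gaussian once `|w| = 1`.

It remains to bound `ψ x φ z - ψ (ρ x) φ (ρ z)`, a quantity in which `γ` no longer appears; this is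
why the convergence is uniform in `γ`. Fix `a < 1` above `max c₁ 0` and write
`e t = exp (a t² / 2)`. For every `ε` there is `C` such that the difference is at most
`ε (e x + e z + e (ρ x) + e (ρ z)) + C (ρ² - 1)²` (`exists_dilation_bound`). The Gaussian exponential
moments are finite because `a < 1`; the spherical ones are no larger, by Jensen's inequality for the
exponential in `ρ²`, whose mean is `1` (`integral_exp_sphere_le`). Finally
`E (ρ² - 1)² = Var(N²) / d` for `N` standard Gaussian (`radius_moments`), so the expected difference
is `O(ε) + O_ε(1 / d)`. Boundedness of the Gaussian average follows from `|ψ φ| ≤ (ψ² + φ²) / 2`.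
-/

open MeasureTheory ProbabilityTheory

/-- `μ` is the uniform probability measure on the sphere of radius `r` in `ℝ^d`:
a probability measure supported on the sphere and invariant under every orthogonal
linear transformation (this characterizes it uniquely). -/
def IsUniformOnSphere (d : ℕ) (r : ℝ) (μ : Measure (Fin d → ℝ)) : Prop :=
  IsProbabilityMeasure μ ∧
  μ {x | ∑ i, x i ^ 2 ≠ r ^ 2} = 0 ∧
  ∀ T : (Fin d → ℝ) →ₗ[ℝ] (Fin d → ℝ),
    (∀ x y : Fin d → ℝ, ∑ i, T x i * T y i = ∑ i, x i * y i) →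
    Measure.map T μ = μ

/-- `E[ψ,φ](γ) = E[ψ(G₁)φ(G₂)]` where `(G₁,G₂)` is a centered Gaussian pair with unit
variances and correlation `γ`; equivalently `E_{g ~ N(0,I_d/d)}[ψ(⟨x,g⟩)φ(⟨x',g⟩)]` for
any unit-norm-√d vectors with `⟨x,x'⟩/d = γ`. -/
noncomputable def Egauss (ψ φ : ℝ → ℝ) (γ : ℝ) : ℝ :=
  ∫ u, ∫ v, ψ u * φ (γ * u + Real.sqrt (1 - γ ^ 2) * v)
    ∂(gaussianReal 0 1) ∂(gaussianReal 0 1)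

/-- `E_d[ψ,φ](γ) = E_{w ~ Unif(S^{d-1}(1))}[ψ(⟨x,w⟩)φ(⟨x',w⟩)]`, computed with the
concrete choice `x = √d·e₁`, `x' = √d(γ·e₁ + √(1-γ²)·e₂)` (by rotational invariance the
value does not depend on this choice). -/
noncomputable def Esphere (d : ℕ) (hd : 2 ≤ d) (ψ φ : ℝ → ℝ) (μ : Measure (Fin d → ℝ))
    (γ : ℝ) : ℝ :=
  ∫ w, ψ (Real.sqrt d * w ⟨0, by omega⟩) *
    φ (Real.sqrt d * (γ * w ⟨0, by omega⟩ + Real.sqrt (1 - γ ^ 2) * w ⟨1, by omega⟩)) ∂μ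

/-! ### Gaussian laws and rotation invariance -/

lemma integrable_exp_sq_gaussianReal {a : ℝ} (ha : a < 1) :
    Integrable (fun x : ℝ => Real.exp (a * x ^ 2 / 2)) (gaussianReal 0 1) := by
  rw [gaussianReal_of_var_ne_zero 0 one_ne_zero,
    integrable_withDensity_iff_integrable_smul' (measurable_gaussianPDF 0 1)
      (ae_of_all _ fun _ => gaussianPDF_lt_top)]
  have h := (integrable_exp_neg_mul_sq (b := (1 - a) / 2) (by linarith)).const_mul
    (Real.sqrt (2 * Real.pi))⁻¹
  refine h.congr (ae_of_all _ fun x => ?_)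
  simp only [toReal_gaussianPDF, gaussianPDFReal_def, smul_eq_mul, NNReal.coe_one, mul_one]
  rw [mul_assoc, ← Real.exp_add]
  ring_nf

lemma map_dot_pi_gaussianReal {ι : Type*} [Fintype ι] (v : ι → ℝ) :
    (Measure.pi fun _ : ι => gaussianReal 0 1).map (fun g => ∑ i, v i * g i)
      = gaussianReal 0 (∑ i, v i ^ 2).toNNReal := by
  have hm : Measurable (fun g : ι → ℝ => ∑ i, v i * g i) := by fun_prop
  have : IsProbabilityMeasure ((Measure.pi fun _ : ι => gaussianReal 0 1).map
      (fun g => ∑ i, v i * g i)) := Measure.isProbabilityMeasure_map hm.aemeasurable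
  refine Measure.ext_of_charFun (funext fun t => ?_)
  have h := charFun_pi (μ := fun _ : ι => gaussianReal 0 1) (WithLp.toLp 2 fun i => t * v i)
  rw [charFun_apply, integral_map (by fun_prop) (by fun_prop)] at h
  rw [charFun_apply, integral_map hm.aemeasurable (by fun_prop)]
  have e : ∀ g : ι → ℝ, inner ℝ (WithLp.toLp 2 g : EuclideanSpace ℝ ι)
      (WithLp.toLp 2 fun i => t * v i) = inner ℝ (∑ i, v i * g i) t := by
    intro g
    simp only [PiLp.inner_apply, RCLike.inner_apply, conj_trivial, Finset.mul_sum]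
    exact Finset.sum_congr rfl fun i _ => by ring
  simp only [e] at h
  rw [h]
  simp only [charFun_gaussianReal, ← Complex.exp_sum]
  congr 1
  have h0 : ((∑ i, v i ^ 2).toNNReal : ℝ) = ∑ i, v i ^ 2 :=
    Real.coe_toNNReal _ (Finset.sum_nonneg fun i _ => sq_nonneg _)
  have h1 : (((∑ i, v i ^ 2).toNNReal : ℝ) : ℂ) = ∑ i, (v i : ℂ) ^ 2 := by
    rw [h0]; push_cast; rfl
  rw [h1]
  simp only [NNReal.coe_one, Complex.ofReal_one, one_mul, Complex.ofReal_zero, mul_zero, zero_mul,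
    zero_sub, Complex.ofReal_mul, mul_pow, Finset.sum_neg_distrib, ← Finset.sum_div,
    ← Finset.mul_sum]
  ring

/-- The law of `∑ i, u i * w i` depends only on the length of `u`: the Householder reflection
exchanging `u` and `u'` is orthogonal and self-adjoint, so it can be moved from `w` to the test
vector. -/
lemma map_dot_eq_of_sq_eq {d : ℕ} {r : ℝ} {μ : Measure (Fin d → ℝ)} (hμ : IsUniformOnSphere d r μ)
    {u u' : Fin d → ℝ} (h : ∑ i, u i ^ 2 = ∑ i, u' i ^ 2) :
    μ.map (fun w => ∑ i, u i * w i) = μ.map (fun w => ∑ i, u' i * w i) := by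
  set n : Fin d → ℝ := fun i => u i - u' i with hn
  set q : ℝ := ∑ i, n i ^ 2 with hq
  let T : (Fin d → ℝ) →ₗ[ℝ] (Fin d → ℝ) :=
    { toFun := fun x i => x i - 2 * (∑ j, n j * x j) / q * n i
      map_add' := by
        intro x y; ext i
        simp only [Pi.add_apply, mul_add, Finset.sum_add_distrib]; ring
      map_smul' := by
        intro c x; ext i
        simp only [Pi.smul_apply, smul_eq_mul, RingHom.id_apply]
        have : ∑ j, n j * (c * x j) = c * ∑ j, n j * x j := by
          rw [Finset.mul_sum]; exact Finset.sum_congr rfl fun i _ => by ring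
        rw [this]; ring }
  have hT : ∀ x i, T x i = x i - 2 * (∑ j, n j * x j) / q * n i := fun _ _ => rfl
  have hexp : ∀ x y : Fin d → ℝ, ∑ i, x i * T y i
      = ∑ i, x i * y i - 2 * (∑ j, n j * y j) / q * ∑ i, n i * x i := by
    intro x y
    simp only [hT, mul_sub, Finset.sum_sub_distrib, Finset.mul_sum]
    congr 1; exact Finset.sum_congr rfl fun i _ => by ring
  have hTn : ∀ y, ∑ i, n i * T y i = - ∑ i, n i * y i := by
    intro y
    rw [hexp]
    have : ∑ i, n i * n i = q := Finset.sum_congr rfl fun i _ => by ring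
    rw [this]
    by_cases hq0 : q = 0
    · have hn0 : ∀ i, n i = 0 := fun i => by
        have := (Finset.sum_eq_zero_iff_of_nonneg (fun i _ => sq_nonneg (n i))).1 hq0 i
          (Finset.mem_univ i)
        simpa using this
      simp [hn0]
    · field_simp; ring
  have horth : ∀ x y : Fin d → ℝ, ∑ i, T x i * T y i = ∑ i, x i * y i := by
    intro x y
    rw [hexp, hTn]
    have : ∑ i, T x i * y i = ∑ i, y i * T x i := Finset.sum_congr rfl fun i _ => mul_comm _ _
    rw [this, hexp]
    have : ∑ i, y i * x i = ∑ i, x i * y i := Finset.sum_congr rfl fun i _ => mul_comm _ _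
    rw [this]; ring
  have hTu : ∀ w : Fin d → ℝ, ∑ i, u i * T w i = ∑ i, u' i * w i := by
    intro w
    rw [hexp]
    have h2 : 2 * ∑ i, n i * u i = q := by
      have : ∀ i, 2 * (n i * u i) = n i ^ 2 + (u i ^ 2 - u' i ^ 2) := fun i => by
        simp only [hn]; ring
      rw [Finset.mul_sum, Finset.sum_congr rfl fun i _ => this i, Finset.sum_add_distrib,
        Finset.sum_sub_distrib, h, sub_self, add_zero]
    have h3 : ∑ i, u' i * w i = ∑ i, u i * w i - ∑ i, n i * w i := by
      rw [← Finset.sum_sub_distrib]; exact Finset.sum_congr rfl fun i _ => by simp only [hn]; ring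
    rw [h3]
    by_cases hq0 : q = 0
    · have hn0 : ∀ i, n i = 0 := fun i => by
        have := (Finset.sum_eq_zero_iff_of_nonneg (fun i _ => sq_nonneg (n i))).1 hq0 i
          (Finset.mem_univ i)
        simpa using this
      simp [hn0]
    · congr 1
      rw [← h2] at hq0 ⊢
      have : ∑ i, n i * u i ≠ 0 := fun h => hq0 (by rw [h, mul_zero])
      field_simp
  have hTm : Measurable T := T.continuous_of_finiteDimensional.measurable
  conv_lhs => rw [← hμ.2.2 T horth]
  rw [Measure.map_map (by fun_prop) hTm]
  congr 1
  exact funext hTu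

lemma IsUniformOnSphere.ae_sum_sq {d : ℕ} {μ : Measure (Fin d → ℝ)}
    (hμ : IsUniformOnSphere d 1 μ) : ∀ᵐ w ∂μ, ∑ i, w i ^ 2 = 1 := by
  have := hμ.2.1
  simpa [ae_iff] using this

/-- The radius of a Gaussian vector times an independent uniform direction has Gaussian marginals.
Averaging over `w` first replaces `⟨|g| v, w⟩` by `⟨|v| g, w⟩`, by rotation invariance of `μ`;
averaging then over `g` gives a Gaussian, since `|w| = 1`. -/
lemma map_norm_mul_dot {d : ℕ} {μ : Measure (Fin d → ℝ)} (hμ : IsUniformOnSphere d 1 μ)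
    (v : Fin d → ℝ) :
    (μ.prod (Measure.pi fun _ : Fin d => gaussianReal 0 1)).map
      (fun p => Real.sqrt (∑ i, p.2 i ^ 2) * ∑ i, v i * p.1 i)
      = gaussianReal 0 (∑ i, v i ^ 2).toNNReal := by
  have := hμ.1
  refine Measure.ext_of_lintegral _ fun f hf => ?_
  rw [lintegral_map hf (by fun_prop), lintegral_prod_symm' _ (by fun_prop)]
  set r := Real.sqrt (∑ i, v i ^ 2) with hr
  have hr2 : r ^ 2 = ∑ i, v i ^ 2 := Real.sq_sqrt (Finset.sum_nonneg fun i _ => sq_nonneg _)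
  have key : ∀ g : Fin d → ℝ,
      ∫⁻ w, f (Real.sqrt (∑ i, g i ^ 2) * ∑ i, v i * w i) ∂μ
        = ∫⁻ w, f (∑ i, (r * w i) * g i) ∂μ := by
    intro g
    have hg2 := Real.sq_sqrt (Finset.sum_nonneg fun i (_ : i ∈ Finset.univ) => sq_nonneg (g i))
    have h1 := map_dot_eq_of_sq_eq hμ (u := fun i => Real.sqrt (∑ i, g i ^ 2) * v i)
      (u' := fun i => r * g i) (by
        simp only [mul_pow, ← Finset.mul_sum, hg2, hr2]; ring)
    have h2 := congrArg (fun m => ∫⁻ x, f x ∂m) h1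
    beta_reduce at h2
    rw [lintegral_map hf (by fun_prop), lintegral_map hf (by fun_prop)] at h2
    convert h2 using 4 with w w
    · rw [Finset.mul_sum]; exact Finset.sum_congr rfl fun i _ => by ring
    · exact Finset.sum_congr rfl fun i _ => by ring
  simp only [key]
  rw [← lintegral_prod_symm' (fun p : (Fin d → ℝ) × (Fin d → ℝ) => f (∑ i, (r * p.1 i) * p.2 i))
    (by fun_prop), lintegral_prod _ (by fun_prop)]
  have key2 : ∀ᵐ w ∂μ, ∫⁻ g, f (∑ i, (r * w i) * g i) ∂(Measure.pi fun _ : Fin d => gaussianReal 0 1)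
      = ∫⁻ x, f x ∂(gaussianReal 0 (∑ i, v i ^ 2).toNNReal) := by
    filter_upwards [hμ.ae_sum_sq] with w hw
    have h1 := map_dot_pi_gaussianReal (fun i => r * w i)
    simp only [mul_pow, ← Finset.mul_sum, hr2, hw, mul_one] at h1
    rw [← h1, lintegral_map hf (by fun_prop)]
  rw [lintegral_congr_ae key2]
  simp

lemma sum_ite_pair_mul {d : ℕ} {j k : Fin d} (hjk : j ≠ k) (α β : ℝ) (w : Fin d → ℝ) :
    ∑ i, (if i = j then α else if i = k then β else 0) * w i = α * w j + β * w k := by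
  have : ∀ i, (if i = j then α else if i = k then β else 0) * w i
      = (if i = j then α * w i else 0) + (if i = k then β * w i else 0) := by
    intro i; split_ifs <;> simp_all
  simp [this, Finset.sum_add_distrib]

lemma sum_ite_pair_sq {d : ℕ} {j k : Fin d} (hjk : j ≠ k) (α β : ℝ) :
    ∑ i, (if i = j then α else if i = k then β else 0) ^ 2 = α ^ 2 + β ^ 2 := by
  have : ∀ i, (if i = j then α else if i = k then β else 0) ^ 2
      = (if i = j then α ^ 2 else 0) + (if i = k then β ^ 2 else 0) := by
    intro i; split_ifs <;> simp_all
  simp [this, Finset.sum_add_distrib]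

/-- Two coordinates of radius times direction form a standard Gaussian pair: all their linear
combinations have the right law, so the characteristic functions agree. -/
lemma map_norm_mul_pair {d : ℕ} {μ : Measure (Fin d → ℝ)} (hμ : IsUniformOnSphere d 1 μ)
    {j k : Fin d} (hjk : j ≠ k) :
    (μ.prod (Measure.pi fun _ : Fin d => gaussianReal 0 1)).map
      (fun p => (Real.sqrt (∑ i, p.2 i ^ 2) * p.1 j, Real.sqrt (∑ i, p.2 i ^ 2) * p.1 k))
      = (gaussianReal 0 1).prod (gaussianReal 0 1) := by
  have := hμ.1
  have hpm : IsProbabilityMeasure ((μ.prod (Measure.pi fun _ : Fin d => gaussianReal 0 1)).map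
      (fun p => (Real.sqrt (∑ i, p.2 i ^ 2) * p.1 j, Real.sqrt (∑ i, p.2 i ^ 2) * p.1 k))) :=
    Measure.isProbabilityMeasure_map (by fun_prop)
  refine charFun_eq_prod_iff.1 fun t => ?_
  obtain ⟨α, β⟩ := t
  have h := congrArg (fun m => charFun m 1)
    (map_norm_mul_dot hμ (fun i => if i = j then α else if i = k then β else 0))
  simp only [sum_ite_pair_mul hjk, sum_ite_pair_sq hjk] at h
  rw [charFun_apply, integral_map (by fun_prop) (by fun_prop)] at h
  rw [charFun_apply, integral_map (by fun_prop) (by fun_prop), integral_map (by fun_prop) (by fun_prop)]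
  simp only [charFun_gaussianReal] at h ⊢
  have h0 : ((α ^ 2 + β ^ 2).toNNReal : ℝ) = α ^ 2 + β ^ 2 :=
    Real.coe_toNNReal _ (by positivity)
  rw [h0] at h
  rw [← Complex.exp_add]
  convert h using 1
  · congr with p
    simp only [WithLp.prod_inner_apply, RCLike.inner_apply, conj_trivial]
    push_cast; ring_nf
  · congr 1; push_cast; simp; ring

/-! ### Pointwise estimates -/

lemma abs_mul_le_exp {ψ φ : ℝ → ℝ} {b c₀ : ℝ}
    (hψb : ∀ u : ℝ, ψ u ^ 2 ≤ c₀ * Real.exp (b * u ^ 2 / 2))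
    (hφb : ∀ u : ℝ, φ u ^ 2 ≤ c₀ * Real.exp (b * u ^ 2 / 2)) (x z : ℝ) :
    |ψ x * φ z| ≤ c₀ / 2 * (Real.exp (b * x ^ 2 / 2) + Real.exp (b * z ^ 2 / 2)) := by
  have h1 := hψb x
  have h2 := hφb z
  rw [abs_le]
  constructor <;> nlinarith [sq_nonneg (ψ x - φ z), sq_nonneg (ψ x + φ z)]

lemma exists_tail_bound {ψ φ : ℝ → ℝ} {a b c₀ : ℝ} (hc₀ : 0 < c₀) (hb : 0 ≤ b) (hba : b < a)
    (hψb : ∀ u : ℝ, ψ u ^ 2 ≤ c₀ * Real.exp (b * u ^ 2 / 2))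
    (hφb : ∀ u : ℝ, φ u ^ 2 ≤ c₀ * Real.exp (b * u ^ 2 / 2)) {ε : ℝ} (hε : 0 < ε) :
    ∃ K : ℝ, 0 < K ∧ ∀ x z : ℝ, K ≤ |x| ∨ K ≤ |z| →
      |ψ x * φ z| ≤ ε * (Real.exp (a * x ^ 2 / 2) + Real.exp (a * z ^ 2 / 2)) := by
  obtain ⟨K, hK1, hK⟩ : ∃ K : ℝ, 0 < K ∧ ∀ t, K ≤ |t| →
      c₀ * Real.exp (b * t ^ 2 / 2) ≤ ε * Real.exp (a * t ^ 2 / 2) := by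
    have hab : 0 < a - b := by linarith
    refine ⟨1 + 2 * (c₀ / ε) / (a - b), by positivity, fun t ht => ?_⟩
    have h1 : 1 ≤ |t| := le_trans (by have : 0 ≤ 2 * (c₀ / ε) / (a - b) := by positivity
                                      linarith) ht
    have h2 : |t| ≤ t ^ 2 := by rw [← sq_abs]; nlinarith
    have h3 : c₀ / ε ≤ (a - b) * t ^ 2 / 2 := by
      have : 2 * (c₀ / ε) / (a - b) ≤ t ^ 2 := by linarith
      rw [div_le_iff₀ hab] at this
      linarith
    have h4 : c₀ / ε ≤ Real.exp ((a - b) * t ^ 2 / 2) :=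
      h3.trans ((by linarith : _ ≤ (a - b) * t ^ 2 / 2 + 1).trans (Real.add_one_le_exp _))
    rw [div_le_iff₀ hε] at h4
    have h5 : Real.exp (a * t ^ 2 / 2)
        = Real.exp ((a - b) * t ^ 2 / 2) * Real.exp (b * t ^ 2 / 2) := by
      rw [← Real.exp_add]; ring_nf
    rw [h5]
    nlinarith [Real.exp_pos (b * t ^ 2 / 2)]
  refine ⟨K, hK1, fun x z h => ?_⟩
  have hmain := abs_mul_le_exp hψb hφb x z
  have hx := Real.exp_pos (a * x ^ 2 / 2)
  have hz := Real.exp_pos (a * z ^ 2 / 2)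
  rcases le_total |x| |z| with hxz | hxz
  · have h1 := hK z (h.elim (fun h => h.trans hxz) id)
    have h2 : Real.exp (b * x ^ 2 / 2) ≤ Real.exp (b * z ^ 2 / 2) := by
      have := sq_le_sq.2 hxz
      gcongr
    nlinarith
  · have h1 := hK x (h.elim id (fun h => h.trans hxz))
    have h2 : Real.exp (b * z ^ 2 / 2) ≤ Real.exp (b * x ^ 2 / 2) := by
      have := sq_le_sq.2 hxz
      gcongr
    nlinarith

/-- The effect of a dilation by `ρ` on `ψ x * φ z`: outside a large box the growth bound makes both
values small relative to the exponentials, inside it uniform continuity applies when `ρ` is near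
`1`, and the remaining case is absorbed by `(ρ ^ 2 - 1) ^ 2`. -/
lemma exists_dilation_bound {ψ φ : ℝ → ℝ} (hψc : Continuous ψ) (hφc : Continuous φ)
    {a b c₀ : ℝ} (hc₀ : 0 < c₀) (hb : 0 ≤ b) (hba : b < a)
    (hψb : ∀ u : ℝ, ψ u ^ 2 ≤ c₀ * Real.exp (b * u ^ 2 / 2))
    (hφb : ∀ u : ℝ, φ u ^ 2 ≤ c₀ * Real.exp (b * u ^ 2 / 2)) {ε : ℝ} (hε : 0 < ε) :
    ∃ C : ℝ, 0 ≤ C ∧ ∀ x z ρ : ℝ, 0 ≤ ρ →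
      |ψ x * φ z - ψ (ρ * x) * φ (ρ * z)| ≤
        ε * (Real.exp (a * x ^ 2 / 2) + Real.exp (a * z ^ 2 / 2)
          + Real.exp (a * (ρ * x) ^ 2 / 2) + Real.exp (a * (ρ * z) ^ 2 / 2))
        + C * (ρ ^ 2 - 1) ^ 2 := by
  obtain ⟨K, hK, htail⟩ := exists_tail_bound hc₀ hb hba hψb hφb hε
  set L := c₀ * Real.exp (b * K ^ 2 / 2) with hL
  have hLpos : 0 < L := by positivity
  have hall : ∀ x z : ℝ, |ψ x * φ z|
      ≤ ε * (Real.exp (a * x ^ 2 / 2) + Real.exp (a * z ^ 2 / 2)) + L := by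
    intro x z
    by_cases h : K ≤ |x| ∨ K ≤ |z|
    · linarith [htail x z h]
    · push Not at h
      have h1 := abs_mul_le_exp hψb hφb x z
      have h2 : Real.exp (b * x ^ 2 / 2) ≤ Real.exp (b * K ^ 2 / 2) := by
        have := sq_le_sq' (by linarith [(abs_lt.1 h.1).1]) (abs_lt.1 h.1).2.le
        gcongr
      have h3 : Real.exp (b * z ^ 2 / 2) ≤ Real.exp (b * K ^ 2 / 2) := by
        have := sq_le_sq' (by linarith [(abs_lt.1 h.2).1]) (abs_lt.1 h.2).2.le
        gcongr
      have h4 : 0 ≤ ε * (Real.exp (a * x ^ 2 / 2) + Real.exp (a * z ^ 2 / 2)) := by positivity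
      nlinarith
  have hcont : Continuous (fun p : ℝ × ℝ × ℝ => ψ (p.1 * p.2.1) * φ (p.1 * p.2.2)) := by fun_prop
  have hcomp : IsCompact (Set.Icc (0 : ℝ) 2 ×ˢ (Set.Icc (-(2 * K)) (2 * K)
      ×ˢ Set.Icc (-(2 * K)) (2 * K))) :=
    isCompact_Icc.prod (isCompact_Icc.prod isCompact_Icc)
  obtain ⟨δ, hδ, huc⟩ := Metric.uniformContinuousOn_iff.1
    (hcomp.uniformContinuousOn_of_continuous hcont.continuousOn) ε hε
  set η := min δ (1 / 2) with hη
  have hηpos : 0 < η := by positivity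
  refine ⟨2 * L / η ^ 2, by positivity, fun x z ρ hρ => ?_⟩
  have ex := Real.one_le_exp (x := a * x ^ 2 / 2) (by
    have := hb.trans_lt hba; positivity)
  have ez := Real.exp_pos (a * z ^ 2 / 2)
  have exr := Real.exp_pos (a * (ρ * x) ^ 2 / 2)
  have ezr := Real.exp_pos (a * (ρ * z) ^ 2 / 2)
  have htri : |ψ x * φ z - ψ (ρ * x) * φ (ρ * z)| ≤ |ψ x * φ z| + |ψ (ρ * x) * φ (ρ * z)| :=
    abs_sub _ _
  rcases le_or_gt η |ρ - 1| with h | h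
  · have h1 : η ^ 2 ≤ (ρ ^ 2 - 1) ^ 2 := by
      have e1 : η ^ 2 ≤ (ρ - 1) ^ 2 := by rw [← sq_abs (ρ - 1)]; gcongr
      have e2 : (ρ ^ 2 - 1) ^ 2 = (ρ - 1) ^ 2 * (ρ + 1) ^ 2 := by ring
      rw [e2]
      nlinarith [sq_nonneg (ρ - 1), mul_nonneg (sq_nonneg (ρ - 1)) (by positivity : 0 ≤ ρ ^ 2 + 2 * ρ)]
    have h2 : 2 * L ≤ 2 * L / η ^ 2 * (ρ ^ 2 - 1) ^ 2 := by
      rw [div_mul_eq_mul_div, le_div_iff₀ (by positivity)]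
      gcongr
    linarith [hall x z, hall (ρ * x) (ρ * z)]
  · have hρ1 : 1 / 2 ≤ ρ := by
      have := (abs_lt.1 (h.trans_le (min_le_right _ _))).1; linarith
    have hρ2 : ρ ≤ 2 := by
      have := (abs_lt.1 (h.trans_le (min_le_right _ _))).2; linarith
    have hnn : 0 ≤ 2 * L / η ^ 2 * (ρ ^ 2 - 1) ^ 2 := by positivity
    by_cases hbox : |x| ≤ 2 * K ∧ |z| ≤ 2 * K
    · have hx := Set.mem_Icc.2 (abs_le.1 hbox.1)
      have hz := Set.mem_Icc.2 (abs_le.1 hbox.2)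
      have := huc (1, x, z) ⟨⟨zero_le_one, one_le_two⟩, hx, hz⟩ (ρ, x, z) ⟨⟨hρ, hρ2⟩, hx, hz⟩ (by
        rw [Prod.dist_eq, dist_self, Real.dist_eq, abs_sub_comm]
        exact max_lt (h.trans_le (min_le_left _ _)) hδ)
      rw [Real.dist_eq] at this
      simp only [one_mul] at this
      nlinarith
    · have scale : ∀ t : ℝ, 2 * K < |t| → K ≤ |ρ * t| := fun t ht => by
        rw [abs_mul, abs_of_nonneg hρ]; nlinarith
      rw [not_and_or, not_le, not_le] at hbox
      have t1 := htail x z (hbox.imp (fun h => by linarith) (fun h => by linarith))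
      have t2 := htail (ρ * x) (ρ * z) (hbox.imp (scale x) (scale z))
      linarith

/-! ### Moments of the radius and exponential moments on the sphere -/

lemma memLp_sq_gaussianReal : MemLp (fun x : ℝ => x ^ 2) 2 (gaussianReal 0 1) := by
  have h : MemLp (fun x : ℝ => x) 4 (gaussianReal 0 1) := by
    simpa using! memLp_id_gaussianReal' (μ := 0) (v := 1) 4 (by simp)
  rw [memLp_two_iff_integrable_sq (by fun_prop)]
  have := h.integrable_norm_pow (by norm_num)
  refine this.congr (ae_of_all _ fun x => ?_)
  simp only [Real.norm_eq_abs]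
  rw [← pow_mul]
  simpa using (Even.pow_abs (by decide : Even 4) x)

lemma integral_sq_gaussianReal : ∫ x, x ^ 2 ∂(gaussianReal 0 1) = 1 := by
  have h := variance_fun_id_gaussianReal (μ := 0) (v := 1)
  rw [variance_eq_integral (by fun_prop)] at h
  simpa using h

/-- Concentration of the squared radius `|g|² / d` around `1`. -/
lemma radius_moments {d : ℕ} (hd : 0 < d) :
    Integrable (fun g : Fin d → ℝ => (∑ i, g i ^ 2) / d)
        (Measure.pi fun _ : Fin d => gaussianReal 0 1) ∧
      ∫ g, (∑ i, g i ^ 2) / d ∂(Measure.pi fun _ : Fin d => gaussianReal 0 1) = 1 ∧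
      Integrable (fun g : Fin d → ℝ => ((∑ i, g i ^ 2) / d - 1) ^ 2)
        (Measure.pi fun _ : Fin d => gaussianReal 0 1) ∧
      ∫ g, ((∑ i, g i ^ 2) / d - 1) ^ 2 ∂(Measure.pi fun _ : Fin d => gaussianReal 0 1)
        = Var[fun x => x ^ 2; gaussianReal 0 1] / d := by
  have hd' : (d : ℝ) ≠ 0 := by positivity
  set ν := Measure.pi fun _ : Fin d => gaussianReal 0 1 with hν
  have hL : ∀ i : Fin d, MemLp (fun g : Fin d → ℝ => g i ^ 2) 2 ν := fun i =>
    memLp_sq_gaussianReal.comp_measurePreserving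
      (measurePreserving_eval (fun _ : Fin d => gaussianReal 0 1) i)
  have hS : MemLp (fun g : Fin d → ℝ => ∑ i, g i ^ 2) 2 ν :=
    memLp_finsetSum _ fun i _ => hL i
  have hmean : ∫ g, ∑ i, g i ^ 2 ∂ν = d := by
    rw [integral_finsetSum _ fun i _ => (hL i).integrable one_le_two]
    have : ∀ i : Fin d, ∫ g : Fin d → ℝ, g i ^ 2 ∂ν = 1 := fun i => by
      rw [hν, integral_comp_eval (μ := fun _ : Fin d => gaussianReal 0 1) (i := i)
        (f := fun x : ℝ => x ^ 2) (by fun_prop), integral_sq_gaussianReal]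
    simp [this]
  have hvar : ∫ g, (∑ i, g i ^ 2 - d) ^ 2 ∂ν = d * Var[fun x => x ^ 2; gaussianReal 0 1] := by
    have h := variance_sum_pi (μ := fun _ : Fin d => gaussianReal 0 1)
      (X := fun _ x => x ^ 2) (fun _ => memLp_sq_gaussianReal)
    have e : (∑ i, fun ω : Fin d → ℝ => ω i ^ 2) = fun g : Fin d → ℝ => ∑ i, g i ^ 2 := by
      ext g; simp
    rw [e, variance_eq_integral hS.aestronglyMeasurable.aemeasurable, hmean] at h
    simpa using h
  have hsq : ∀ g : Fin d → ℝ, ((∑ i, g i ^ 2) / d - 1) ^ 2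
      = (∑ i, g i ^ 2 - d) ^ 2 / (d : ℝ) ^ 2 := fun g => by field_simp
  refine ⟨(hS.integrable one_le_two).div_const _, ?_, ?_, ?_⟩
  · rw [integral_div, hmean, div_self hd']
  · simp only [hsq]
    exact ((hS.sub (memLp_const _)).integrable_sq).div_const _
  · simp only [hsq]
    rw [integral_div, hvar]
    field_simp

lemma IsUniformOnSphere.ae_dot_sq_le {d : ℕ} {μ : Measure (Fin d → ℝ)}
    (hμ : IsUniformOnSphere d 1 μ) {v : Fin d → ℝ} (hv : ∑ i, v i ^ 2 = 1) :
    ∀ᵐ w ∂μ, (∑ i, v i * w i) ^ 2 ≤ 1 := by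
  filter_upwards [hμ.ae_sum_sq] with w hw
  simpa [hv, hw] using Finset.sum_mul_sq_le_sq_mul_sq Finset.univ v w

lemma integrable_exp_norm_mul_dot {d : ℕ} {μ : Measure (Fin d → ℝ)} (hμ : IsUniformOnSphere d 1 μ)
    {v : Fin d → ℝ} (hv : ∑ i, v i ^ 2 = 1) {a : ℝ} (ha : a < 1) :
    Integrable (fun p : (Fin d → ℝ) × (Fin d → ℝ) =>
      Real.exp (a * (Real.sqrt (∑ i, p.2 i ^ 2) * ∑ i, v i * p.1 i) ^ 2 / 2))
      (μ.prod (Measure.pi fun _ : Fin d => gaussianReal 0 1)) ∧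
    ∫ p, Real.exp (a * (Real.sqrt (∑ i, p.2 i ^ 2) * ∑ i, v i * p.1 i) ^ 2 / 2)
      ∂(μ.prod (Measure.pi fun _ : Fin d => gaussianReal 0 1))
      = ∫ x, Real.exp (a * x ^ 2 / 2) ∂(gaussianReal 0 1) := by
  have hlaw := map_norm_mul_dot hμ v
  rw [hv, Real.toNNReal_one] at hlaw
  have h_int := integrable_exp_sq_gaussianReal ha
  have hm : Measurable (fun p : (Fin d → ℝ) × (Fin d → ℝ) =>
    Real.sqrt (∑ i, p.2 i ^ 2) * ∑ i, v i * p.1 i) := by fun_prop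
  rw [← hlaw] at h_int
  refine ⟨h_int.comp_measurable hm, ?_⟩
  conv_rhs => rw [← hlaw]
  rw [integral_map hm.aemeasurable (by fun_prop)]

/-- Spherical exponential moments are at most the Gaussian ones: by convexity of the exponential
in the squared radius, replacing `|g|²` by its mean `d` can only decrease the expectation. -/
lemma integral_exp_sphere_le {d : ℕ} (hd : 0 < d) {μ : Measure (Fin d → ℝ)}
    (hμ : IsUniformOnSphere d 1 μ)
    {v : Fin d → ℝ} (hv : ∑ i, v i ^ 2 = 1) {a : ℝ} (ha0 : 0 ≤ a) (ha : a < 1) :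
    Integrable (fun w => Real.exp (a * (Real.sqrt d * ∑ i, v i * w i) ^ 2 / 2)) μ ∧
    ∫ w, Real.exp (a * (Real.sqrt d * ∑ i, v i * w i) ^ 2 / 2) ∂μ
      ≤ ∫ x, Real.exp (a * x ^ 2 / 2) ∂(gaussianReal 0 1) := by
  have := hμ.1
  have hd' : (d : ℝ) ≠ 0 := by positivity
  obtain ⟨hS, hS1, -, -⟩ := radius_moments hd
  obtain ⟨hE, hE1⟩ := integrable_exp_norm_mul_dot hμ hv ha
  set ν := Measure.pi fun _ : Fin d => gaussianReal 0 1 with hν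
  set q : (Fin d → ℝ) → ℝ := fun w => a * (Real.sqrt d * ∑ i, v i * w i) ^ 2 / 2 with hq
  have hqm : Measurable q := by fun_prop
  have hqb : ∀ᵐ w ∂μ, |q w| ≤ a * d / 2 := by
    filter_upwards [hμ.ae_dot_sq_le hv] with w hw
    rw [abs_of_nonneg (by simp only [hq]; positivity)]
    simp only [hq, mul_pow, Real.sq_sqrt (Nat.cast_nonneg d)]
    have : a * (d * (∑ i, v i * w i) ^ 2) ≤ a * (d * 1) := by gcongr
    linarith
  have hi1 : Integrable (fun w => Real.exp (q w)) μ :=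
    Integrable.of_bound (by fun_prop) (Real.exp (a * d / 2)) (by
      filter_upwards [hqb] with w hw
      rw [Real.norm_eq_abs, Real.abs_exp]
      exact Real.exp_le_exp.2 (abs_le.1 hw).2)
  have hi2 : Integrable (fun w => Real.exp (q w) * q w) μ :=
    Integrable.of_bound (by fun_prop) (Real.exp (a * d / 2) * (a * d / 2)) (by
      filter_upwards [hqb] with w hw
      rw [norm_mul, Real.norm_eq_abs, Real.abs_exp, Real.norm_eq_abs]
      gcongr
      exact (abs_le.1 hw).2)
  have hS2 : Integrable (fun g : Fin d → ℝ => (∑ i, g i ^ 2) / d - 1) ν :=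
    hS.sub (integrable_const _)
  have hS3 : ∫ g, ((∑ i, g i ^ 2) / d - 1) ∂ν = 0 := by
    rw [integral_sub hS (integrable_const _), hS1]; simp
  refine ⟨hi1, ?_⟩
  have hlow : ∫ p, (Real.exp (q p.1) + Real.exp (q p.1) * q p.1 * ((∑ i, p.2 i ^ 2) / d - 1))
      ∂(μ.prod ν) = ∫ w, Real.exp (q w) ∂μ := by
    rw [integral_add (hi1.comp_fst ν) (hi2.mul_prod hS2),
      integral_prod_mul (fun w => Real.exp (q w) * q w) (fun g : Fin d → ℝ => (∑ i, g i ^ 2) / d - 1),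
      hS3, mul_zero, add_zero, integral_fun_fst (fun w => Real.exp (q w))]
    simp
  rw [← hlow, ← hE1]
  refine integral_mono ((hi1.comp_fst ν).add (hi2.mul_prod hS2)) hE fun p => ?_
  have hs : 0 ≤ ∑ i, p.2 i ^ 2 := Finset.sum_nonneg fun i _ => sq_nonneg _
  -- the tangent line inequality for `exp` at `q p.1`
  have hexp : a * (Real.sqrt (∑ i, p.2 i ^ 2) * ∑ i, v i * p.1 i) ^ 2 / 2
      = q p.1 + q p.1 * ((∑ i, p.2 i ^ 2) / d - 1) := by
    simp only [hq, mul_pow, Real.sq_sqrt hs, Real.sq_sqrt (Nat.cast_nonneg d)]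
    field_simp; ring
  simp only [hexp, Real.exp_add]
  nlinarith [Real.add_one_le_exp (q p.1 * ((∑ i, p.2 i ^ 2) / d - 1)), Real.exp_pos (q p.1)]

/-! ### Comparison of the two averages -/

lemma map_combination_gaussianReal {α β : ℝ} (h : α ^ 2 + β ^ 2 = 1) :
    ((gaussianReal 0 1).prod (gaussianReal 0 1)).map (fun p => α * p.1 + β * p.2)
      = gaussianReal 0 1 := by
  have h1 : ((gaussianReal 0 1).prod (gaussianReal 0 1)).map (fun p => α * p.1 + β * p.2)
      = ((gaussianReal 0 1).map (α * ·)) ∗ ((gaussianReal 0 1).map (β * ·)) := by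
    rw [Measure.conv, Measure.map_prod_map _ _ (by fun_prop) (by fun_prop),
      Measure.map_map (by fun_prop) (by fun_prop)]
    rfl
  rw [h1, gaussianReal_map_const_mul, gaussianReal_map_const_mul, gaussianReal_conv_gaussianReal]
  congr 1
  · simp
  · ext; simpa using h

lemma integrable_gauss_pair {ψ φ : ℝ → ℝ} (hψc : Continuous ψ) (hφc : Continuous φ)
    {a c₀ : ℝ} (ha : a < 1)
    (hψb : ∀ u : ℝ, ψ u ^ 2 ≤ c₀ * Real.exp (a * u ^ 2 / 2))
    (hφb : ∀ u : ℝ, φ u ^ 2 ≤ c₀ * Real.exp (a * u ^ 2 / 2))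
    {α β : ℝ} (h : α ^ 2 + β ^ 2 = 1) :
    Integrable (fun p : ℝ × ℝ => ψ p.1 * φ (α * p.1 + β * p.2))
      ((gaussianReal 0 1).prod (gaussianReal 0 1)) ∧
    |∫ p, ψ p.1 * φ (α * p.1 + β * p.2) ∂((gaussianReal 0 1).prod (gaussianReal 0 1))|
      ≤ c₀ * ∫ x, Real.exp (a * x ^ 2 / 2) ∂(gaussianReal 0 1) := by
  have hlaw := map_combination_gaussianReal h
  have h_int := integrable_exp_sq_gaussianReal ha
  have hm : Measurable (fun p : ℝ × ℝ => α * p.1 + β * p.2) := by fun_prop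
  have hi1 : Integrable (fun p : ℝ × ℝ => Real.exp (a * p.1 ^ 2 / 2))
      ((gaussianReal 0 1).prod (gaussianReal 0 1)) := h_int.comp_fst _
  have he1 : ∫ p : ℝ × ℝ, Real.exp (a * p.1 ^ 2 / 2)
      ∂((gaussianReal 0 1).prod (gaussianReal 0 1))
      = ∫ x, Real.exp (a * x ^ 2 / 2) ∂(gaussianReal 0 1) := by
    rw [integral_fun_fst (fun x => Real.exp (a * x ^ 2 / 2))]; simp
  have hi2 : Integrable (fun p : ℝ × ℝ => Real.exp (a * (α * p.1 + β * p.2) ^ 2 / 2))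
      ((gaussianReal 0 1).prod (gaussianReal 0 1)) := by
    rw [← hlaw] at h_int
    exact h_int.comp_measurable hm
  have he2 : ∫ p : ℝ × ℝ, Real.exp (a * (α * p.1 + β * p.2) ^ 2 / 2)
      ∂((gaussianReal 0 1).prod (gaussianReal 0 1))
      = ∫ x, Real.exp (a * x ^ 2 / 2) ∂(gaussianReal 0 1) := by
    conv_rhs => rw [← hlaw]
    rw [integral_map hm.aemeasurable (by fun_prop)]
  have hbound : ∀ p : ℝ × ℝ, ‖ψ p.1 * φ (α * p.1 + β * p.2)‖ ≤ c₀ / 2 *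
      (Real.exp (a * p.1 ^ 2 / 2) + Real.exp (a * (α * p.1 + β * p.2) ^ 2 / 2)) :=
    fun p => abs_mul_le_exp hψb hφb _ _
  refine ⟨((hi1.add hi2).const_mul (c₀ / 2)).mono' (by fun_prop) (ae_of_all _ hbound), ?_⟩
  have := norm_integral_le_of_norm_le ((hi1.add hi2).const_mul (c₀ / 2)) (ae_of_all _ hbound)
  simp only [Pi.add_apply] at this
  rw [integral_const_mul, integral_add hi1 hi2, he1, he2, Real.norm_eq_abs] at this
  linarith

lemma Egauss_eq_integral_prod {ψ φ : ℝ → ℝ} (hψc : Continuous ψ) (hφc : Continuous φ)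
    {a c₀ : ℝ} (ha : a < 1)
    (hψb : ∀ u : ℝ, ψ u ^ 2 ≤ c₀ * Real.exp (a * u ^ 2 / 2))
    (hφb : ∀ u : ℝ, φ u ^ 2 ≤ c₀ * Real.exp (a * u ^ 2 / 2))
    {γ : ℝ} (h : γ ^ 2 + Real.sqrt (1 - γ ^ 2) ^ 2 = 1) :
    Egauss ψ φ γ = ∫ p, ψ p.1 * φ (γ * p.1 + Real.sqrt (1 - γ ^ 2) * p.2)
      ∂((gaussianReal 0 1).prod (gaussianReal 0 1)) :=
  (integral_prod _ (integrable_gauss_pair hψc hφc ha hψb hφb h).1).symm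

/-- The comparison of the two averages. On the product space carrying `w` and an independent
Gaussian vector `g`, the point `√d w` has the spherical law and its dilate `|g| w` the Gaussian one,
so the dilation bound can be integrated term by term. -/
lemma abs_Esphere_sub_Egauss_le {ψ φ : ℝ → ℝ} (hψc : Continuous ψ) (hφc : Continuous φ)
    {a c₀ ε C : ℝ} (ha0 : 0 ≤ a) (ha : a < 1) (hε : 0 ≤ ε)
    (hψb : ∀ u : ℝ, ψ u ^ 2 ≤ c₀ * Real.exp (a * u ^ 2 / 2))
    (hφb : ∀ u : ℝ, φ u ^ 2 ≤ c₀ * Real.exp (a * u ^ 2 / 2))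
    (hC : ∀ x z ρ : ℝ, 0 ≤ ρ →
      |ψ x * φ z - ψ (ρ * x) * φ (ρ * z)| ≤
        ε * (Real.exp (a * x ^ 2 / 2) + Real.exp (a * z ^ 2 / 2)
          + Real.exp (a * (ρ * x) ^ 2 / 2) + Real.exp (a * (ρ * z) ^ 2 / 2))
        + C * (ρ ^ 2 - 1) ^ 2)
    {d : ℕ} (hd : 2 ≤ d) {μ : Measure (Fin d → ℝ)} (hμ : IsUniformOnSphere d 1 μ)
    {γ : ℝ} (hγ : γ ∈ Set.Icc (-1 : ℝ) 1) :
    |Esphere d hd ψ φ μ γ - Egauss ψ φ γ| ≤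
      ε * (4 * ∫ x, Real.exp (a * x ^ 2 / 2) ∂(gaussianReal 0 1))
        + C * (Var[fun x => x ^ 2; gaussianReal 0 1] / d) := by
  have := hμ.1
  have hd0 : 0 < d := by omega
  have hdR : (0 : ℝ) < d := by exact_mod_cast hd0
  have hs : γ ^ 2 + Real.sqrt (1 - γ ^ 2) ^ 2 = 1 := by
    rw [Real.sq_sqrt (by nlinarith [hγ.1, hγ.2])]; ring
  rw [Egauss_eq_integral_prod hψc hφc ha hψb hφb hs]
  have hG := (integrable_gauss_pair hψc hφc ha hψb hφb hs).1
  obtain ⟨-, -, hS, hS1⟩ := radius_moments hd0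
  set j : Fin d := ⟨0, by omega⟩ with hj
  set k : Fin d := ⟨1, by omega⟩ with hk
  have hjk : j ≠ k := by simp [hj, hk]
  set s := Real.sqrt (1 - γ ^ 2) with hsdef
  have hv0 := sum_ite_pair_sq hjk 1 0
  have hv1 := sum_ite_pair_sq hjk γ s
  rw [hs] at hv1
  norm_num only at hv0
  obtain ⟨hX, hX1⟩ := integral_exp_sphere_le hd0 hμ hv0 ha0 ha
  obtain ⟨hZ, hZ1⟩ := integral_exp_sphere_le hd0 hμ hv1 ha0 ha
  obtain ⟨hRX, hRX1⟩ := integrable_exp_norm_mul_dot hμ hv0 ha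
  obtain ⟨hRZ, hRZ1⟩ := integrable_exp_norm_mul_dot hμ hv1 ha
  have hpair := map_norm_mul_pair hμ hjk
  simp only [sum_ite_pair_mul hjk, one_mul, zero_mul, add_zero]
    at hX hX1 hZ hZ1 hRX hRX1 hRZ hRZ1
  set ν := Measure.pi fun _ : Fin d => gaussianReal 0 1 with hν
  set M := ∫ x, Real.exp (a * x ^ 2 / 2) ∂(gaussianReal 0 1) with hM
  have hm : Measurable (fun p : (Fin d → ℝ) × (Fin d → ℝ) =>
      (Real.sqrt (∑ i, p.2 i ^ 2) * p.1 j, Real.sqrt (∑ i, p.2 i ^ 2) * p.1 k)) := by fun_prop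
  rw [← hpair] at hG ⊢
  rw [integral_map hm.aemeasurable (by fun_prop)]
  have hG' := hG.comp_measurable hm
  simp only [Function.comp_def] at hG' ⊢
  have hF : Integrable (fun w : Fin d → ℝ => ψ (Real.sqrt d * w j)
      * φ (Real.sqrt d * (γ * w j + s * w k))) μ :=
    ((hX.add hZ).const_mul (c₀ / 2)).mono' (by fun_prop)
      (ae_of_all _ fun w => abs_mul_le_exp hψb hφb _ _)
  have hE : Esphere d hd ψ φ μ γ = ∫ p, ψ (Real.sqrt d * p.1 j)
      * φ (Real.sqrt d * (γ * p.1 j + s * p.1 k)) ∂(μ.prod ν) := by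
    rw [integral_fun_fst (fun w : Fin d → ℝ => ψ (Real.sqrt d * w j)
      * φ (Real.sqrt d * (γ * w j + s * w k)))]
    simp [Esphere, ← hj, ← hk, ← hsdef]
  rw [hE, ← integral_sub (hF.comp_fst ν) hG', ← Real.norm_eq_abs]
  have hiX := hX.comp_fst ν
  have hiZ := hZ.comp_fst ν
  have hiS := hS.comp_snd μ
  refine (norm_integral_le_of_norm_le
    (((((hiX.add hiZ).add hRX).add hRZ).const_mul ε).add (hiS.const_mul C))
    (ae_of_all _ fun p => ?_)).trans ?_
  · have hsum : 0 ≤ ∑ i, p.2 i ^ 2 := Finset.sum_nonneg fun i _ => sq_nonneg _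
    have h := hC (Real.sqrt d * p.1 j) (Real.sqrt d * (γ * p.1 j + s * p.1 k))
      (Real.sqrt ((∑ i, p.2 i ^ 2) / d)) (Real.sqrt_nonneg _)
    have hmul : ∀ t : ℝ, Real.sqrt ((∑ i, p.2 i ^ 2) / d) * (Real.sqrt d * t)
        = Real.sqrt (∑ i, p.2 i ^ 2) * t := fun t => by
      rw [← mul_assoc, ← Real.sqrt_mul (by positivity), div_mul_cancel₀ _ hdR.ne']
    rw [hmul, hmul, Real.sq_sqrt (by positivity)] at h
    have hlin : γ * (Real.sqrt (∑ i, p.2 i ^ 2) * p.1 j)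
        + s * (Real.sqrt (∑ i, p.2 i ^ 2) * p.1 k)
        = Real.sqrt (∑ i, p.2 i ^ 2) * (γ * p.1 j + s * p.1 k) := by ring
    simpa only [Real.norm_eq_abs, hlin, Pi.add_apply] using h
  · have e1 : ∫ p : (Fin d → ℝ) × (Fin d → ℝ), Real.exp (a * (Real.sqrt d * p.1 j) ^ 2 / 2)
        ∂(μ.prod ν) ≤ M := by
      rw [integral_fun_fst (fun w : Fin d → ℝ => Real.exp (a * (Real.sqrt d * w j) ^ 2 / 2))]
      simpa using hX1
    have e2 : ∫ p : (Fin d → ℝ) × (Fin d → ℝ),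
        Real.exp (a * (Real.sqrt d * (γ * p.1 j + s * p.1 k)) ^ 2 / 2) ∂(μ.prod ν) ≤ M := by
      rw [integral_fun_fst (fun w : Fin d → ℝ =>
        Real.exp (a * (Real.sqrt d * (γ * w j + s * w k)) ^ 2 / 2))]
      simpa using hZ1
    have e3 : ∫ p : (Fin d → ℝ) × (Fin d → ℝ), ((∑ i, p.2 i ^ 2) / d - 1) ^ 2 ∂(μ.prod ν)
        = Var[fun x => x ^ 2; gaussianReal 0 1] / d := by
      rw [integral_fun_snd (fun g : Fin d → ℝ => ((∑ i, g i ^ 2) / d - 1) ^ 2), hS1]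
      simp
    rw [integral_add' ((((hiX.add hiZ).add hRX).add hRZ).const_mul ε) (hiS.const_mul C),
      integral_const_mul, integral_const_mul, integral_add' ((hiX.add hiZ).add hRX) hRZ,
      integral_add' (hiX.add hiZ) hRX, integral_add' hiX hiZ, e3, hRX1, hRZ1]
    gcongr
    linarith

/-- **Uniform convergence of spherical averages to Gaussian averages.**
If `ψ, φ` are continuous with `ψ(u)², φ(u)² ≤ c₀ exp(c₁u²/2)` for some `c₀ > 0`, `c₁ < 1`,
then `sup_{γ ∈ [-1,1]} |E_d[ψ,φ](γ) − E[ψ,φ](γ)| → 0` as `d → ∞`, and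
`sup_{γ ∈ [-1,1]} |E[ψ,φ](γ)| < ∞`. -/
theorem spherical_to_gaussian_average (ψ φ : ℝ → ℝ)
    (hψc : Continuous ψ) (hφc : Continuous φ)
    (c₀ c₁ : ℝ) (hc₀ : 0 < c₀) (hc₁ : c₁ < 1)
    (hψb : ∀ u : ℝ, ψ u ^ 2 ≤ c₀ * Real.exp (c₁ * u ^ 2 / 2))
    (hφb : ∀ u : ℝ, φ u ^ 2 ≤ c₀ * Real.exp (c₁ * u ^ 2 / 2)) :
    (∀ ε : ℝ, 0 < ε → ∃ d₀ : ℕ, ∀ (d : ℕ) (hd : 2 ≤ d), d₀ ≤ d →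
      ∀ μ : Measure (Fin d → ℝ), IsUniformOnSphere d 1 μ →
        ∀ γ ∈ Set.Icc (-1 : ℝ) 1,
          |Esphere d hd ψ φ μ γ - Egauss ψ φ γ| ≤ ε) ∧
    (∃ M : ℝ, ∀ γ ∈ Set.Icc (-1 : ℝ) 1, |Egauss ψ φ γ| ≤ M) := by
  -- `c₁` may be negative, while the tail estimate needs `u ↦ exp (b * u ^ 2 / 2)` monotone in `|u|`
  set b := max c₁ 0 with hb
  set a := (1 + b) / 2 with ha
  have hb0 : 0 ≤ b := le_max_right _ _
  have hb1 : b < 1 := max_lt hc₁ one_pos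
  have hba : b < a := by linarith
  have ha1 : a < 1 := by linarith
  have weaken : ∀ {f : ℝ → ℝ} {c c' : ℝ}, c ≤ c' →
      (∀ u : ℝ, f u ^ 2 ≤ c₀ * Real.exp (c * u ^ 2 / 2)) →
      ∀ u : ℝ, f u ^ 2 ≤ c₀ * Real.exp (c' * u ^ 2 / 2) := fun hc hf u =>
    (hf u).trans (by gcongr)
  have hψb' := weaken (le_max_left c₁ 0) hψb
  have hφb' := weaken (le_max_left c₁ 0) hφb
  have hψa := weaken hba.le hψb'
  have hφa := weaken hba.le hφb'
  refine ⟨fun ε hε => ?_, ?_⟩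
  · set M := ∫ x, Real.exp (a * x ^ 2 / 2) ∂(gaussianReal 0 1) with hM
    set V := Var[fun x => x ^ 2; gaussianReal 0 1] with hV
    have hM0 : 0 ≤ M := integral_nonneg fun _ => (Real.exp_pos _).le
    have hV0 : 0 ≤ V := variance_nonneg _ _
    have hη : 0 < ε / (2 * (4 * M + 1)) := by positivity
    obtain ⟨C, hC0, hC⟩ := exists_dilation_bound hψc hφc hc₀ hb0 hba hψb' hφb' hη
    obtain ⟨d₀, hd₀⟩ := exists_nat_ge (2 * (C * V) / ε)
    refine ⟨d₀, fun d hd hdd μ hμ γ hγ => ?_⟩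
    refine (abs_Esphere_sub_Egauss_le hψc hφc (by linarith) ha1 hη.le hψa hφa hC hd hμ hγ).trans ?_
    rw [← hM, ← hV]
    have hdR : (0 : ℝ) < d := by exact_mod_cast (by omega : 0 < d)
    have h1 : ε / (2 * (4 * M + 1)) * (4 * M) ≤ ε / 2 := by
      rw [div_mul_eq_mul_div, div_le_iff₀ (by positivity)]
      nlinarith
    have h2 : C * (V / d) ≤ ε / 2 := by
      have h3 : 2 * (C * V) / ε ≤ d := hd₀.trans (by exact_mod_cast hdd)
      rw [div_le_iff₀ hε] at h3
      rw [← mul_div_assoc, div_le_iff₀ hdR]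
      linarith
    linarith
  · refine ⟨c₀ * ∫ x, Real.exp (a * x ^ 2 / 2) ∂(gaussianReal 0 1), fun γ hγ => ?_⟩
    have hs : γ ^ 2 + Real.sqrt (1 - γ ^ 2) ^ 2 = 1 := by
      rw [Real.sq_sqrt (by nlinarith [hγ.1, hγ.2])]; ring
    rw [Egauss_eq_integral_prod hψc hφc ha1 hψa hφa hs]
    exact (integrable_gauss_pair hψc hφc ha1 hψa hφa hs).2
end
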